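/- Let (q1,p1,q2,p2) be a rational solution of A5^(2)(α0,α1,α2,α3) and let H be its Hamiltonian. Then H has no pole at 0, and 4·(h∞ − H(0)) ∈ ℤ, where h∞ = (3/4)·(α0+α1+α3)² − (1/2)·(−2α0+α3)·(−2α1+α3) − 3·(α0+α1)·α3 is the limit of H(t) + t/4 along the cocompact filter on ℂ. -/

import Mathlib

open Filter Topology Polynomial

/-- Evaluation of a rational function with complex coefficients at a point,
using its reduced numerator and denominator. -/
noncomputable def evR (f : RatFunc ℂ) (t : ℂ) : ℂ := f.num.eval t / f.denom.eval t

/-- A rational function has no pole at `c` if its reduced denominator does not vanish at `c`. -/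
def NoPoleAt (f : RatFunc ℂ) (c : ℂ) : Prop := f.denom.eval c ≠ 0

/-- `(q1, p1, q2, p2)` is a rational solution of the Sasano system
`A5^(2)(α0, α1, α2, α3)` (the parameter `α2` does not occur in the equations):
the four differential equations hold at every point `t ∈ ℂ` which is not a pole
of any of `q1, p1, q2, p2`. -/
def IsSasanoSol (a0 a1 a3 : ℂ) (q1 p1 q2 p2 : RatFunc ℂ) : Prop :=
  ∀ t : ℂ, NoPoleAt q1 t → NoPoleAt p1 t → NoPoleAt q2 t → NoPoleAt p2 t →
    (t * deriv (evR q1) t =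
      2 * (evR q1 t) ^ 2 * evR p1 t - (evR q1 t) ^ 2 + (a0 + a1 + a3) * evR q1 t
        - t + 4 * t * evR p2 t + 2 * evR q1 t * evR q2 t * evR p2 t) ∧
    (t * deriv (evR p1) t =
      -2 * evR q1 t * (evR p1 t) ^ 2 + 2 * evR q1 t * evR p1 t
        - (a0 + a1 + a3) * evR p1 t + a0 - 2 * evR p1 t * evR q2 t * evR p2 t) ∧
    (t * deriv (evR q2) t =
      2 * (evR q2 t) ^ 2 * evR p2 t - (evR q2 t) ^ 2 + (a0 + a1 + a3) * evR q2 t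
        - t + 4 * t * evR p1 t + 2 * evR q1 t * evR p1 t * evR q2 t) ∧
    (t * deriv (evR p2) t =
      -2 * evR q2 t * (evR p2 t) ^ 2 + 2 * evR q2 t * evR p2 t
        - (a0 + a1 + a3) * evR p2 t + a1 - 2 * evR q1 t * evR p1 t * evR p2 t)

/-- The Hamiltonian of a solution of the Sasano system, as a rational function. -/
noncomputable def sasanoH (a0 a1 a3 : ℂ) (q1 p1 q2 p2 : RatFunc ℂ) : RatFunc ℂ :=
  q1 ^ 2 * p1 ^ 2 - q1 ^ 2 * p1 + RatFunc.C (a0 + a1 + a3) * q1 * p1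
    - RatFunc.C a0 * q1 - RatFunc.X * p1
  + q2 ^ 2 * p2 ^ 2 - q2 ^ 2 * p2 + RatFunc.C (a0 + a1 + a3) * q2 * p2
    - RatFunc.C a1 * q2 - RatFunc.X * p2
  + 4 * RatFunc.X * p1 * p2 + 2 * q1 * p1 * q2 * p2

open IntermediateField

/-!
At `∞` the equations force the values of all four unknowns, and these determine the value `h∞` of
`H + t/4`. Since `dH/dt` is the partial derivative `4 p₁ p₂ - p₁ - p₂` of `H`, the poles of `H` are
controlled by those of the momenta. At `0` the momenta have poles too mild to produce one of `H`.
At `c ≠ 0`, scaling the coordinates and the derivation `t d/dt` by the local parameter turns the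
system into one in which the coordinates are regular. Comparing leading coefficients then shows
that `H` has at most a simple pole at `c`, with residue `c n / 4` for some integer `n`. Such a term
contributes `-n / 4` at `0` to the partial fraction expansion of `H + t/4`, whose constant term is
`h∞`.
-/

/-! ### Places of a rational function field -/

/-- A place of a rational function field `K = k(x)` with residue field `k`, given by a generator `x`
of `K` that vanishes there to first order. -/
structure RationalPlace (k K : Type*) [Field k] [Field K] [Algebra k K] where
  x : K
  transcendental_x : Transcendental k x
  adjoin_x : k⟮x⟯ = ⊤

namespace RationalPlace

variable {k K : Type*} [Field k] [Field K] [Algebra k K] {P : RationalPlace k K}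
  {f g : K} {a b : k}

/-- `f` is regular at the place `P` and takes the value `a` there. -/
def HasValue (P : RationalPlace k K) (f : K) (a : k) : Prop :=
  ∃ p q : k[X], q.eval 0 ≠ 0 ∧ f = aeval P.x p / aeval P.x q ∧ a = p.eval 0 / q.eval 0

/-- `f` has no pole at the place `P`. -/
def Regular (P : RationalPlace k K) (f : K) : Prop := ∃ a, P.HasValue f a

/-- `f` has a pole of order `n` at the place `P`, and `m` is the leading coefficient of its Laurent
expansion in `P.x`. -/
structure HasPole (P : RationalPlace k K) (f : K) (n : ℕ) (m : k) : Prop where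
  order_ne_zero : n ≠ 0
  leading_ne_zero : m ≠ 0
  hasValue : P.HasValue (P.x ^ n * f) m

lemma aeval_x_ne_zero (P : RationalPlace k K) {p : k[X]} (hp : p ≠ 0) : aeval P.x p ≠ 0 :=
  (transcendental_iff.1 P.transcendental_x p).mt hp

lemma x_ne_zero (P : RationalPlace k K) : P.x ≠ 0 := by
  simpa using P.aeval_x_ne_zero X_ne_zero

lemma aeval_x_ne_zero_of_eval_zero (P : RationalPlace k K) {p : k[X]} (hp : p.eval 0 ≠ 0) :
    aeval P.x p ≠ 0 :=
  P.aeval_x_ne_zero (by rintro rfl; simp at hp)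

lemma hasValue_aeval (P : RationalPlace k K) (p : k[X]) : P.HasValue (aeval P.x p) (p.eval 0) :=
  ⟨p, 1, by simp, by simp, by simp⟩

lemma hasValue_algebraMap (P : RationalPlace k K) (a : k) : P.HasValue (algebraMap k K a) a := by
  simpa using P.hasValue_aeval (C a)

lemma hasValue_x (P : RationalPlace k K) : P.HasValue P.x 0 := by
  simpa using P.hasValue_aeval X

lemma hasValue_zero (P : RationalPlace k K) : P.HasValue 0 0 := by
  simpa using P.hasValue_algebraMap 0

lemma hasValue_one (P : RationalPlace k K) : P.HasValue 1 1 := by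
  simpa using P.hasValue_algebraMap 1

lemma hasValue_ofNat (P : RationalPlace k K) (n : ℕ) [n.AtLeastTwo] :
    P.HasValue (OfNat.ofNat n) (OfNat.ofNat n) := by
  simpa only [map_ofNat] using P.hasValue_algebraMap (OfNat.ofNat n)

namespace HasValue

lemma congr (hf : P.HasValue f a) (hfg : f = g) (hab : a = b) : P.HasValue g b := hfg ▸ hab ▸ hf

lemma regular (hf : P.HasValue f a) : P.Regular f := ⟨a, hf⟩

lemma unique (hf : P.HasValue f a) (hf' : P.HasValue f b) : a = b := by
  obtain ⟨p, q, hq, rfl, rfl⟩ := hf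
  obtain ⟨p', q', hq', h, rfl⟩ := hf'
  rw [div_eq_div_iff (P.aeval_x_ne_zero_of_eval_zero hq) (P.aeval_x_ne_zero_of_eval_zero hq'),
    ← map_mul, ← map_mul] at h
  rw [div_eq_div_iff hq hq', ← eval_mul, ← eval_mul,
    transcendental_iff_injective.1 P.transcendental_x h]

lemma add (hf : P.HasValue f a) (hg : P.HasValue g b) : P.HasValue (f + g) (a + b) := by
  obtain ⟨p, q, hq, rfl, rfl⟩ := hf
  obtain ⟨p', q', hq', rfl, rfl⟩ := hg
  refine ⟨p * q' + q * p', q * q', by simp [hq, hq'], ?_, ?_⟩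
  · rw [div_add_div _ _ (P.aeval_x_ne_zero_of_eval_zero hq) (P.aeval_x_ne_zero_of_eval_zero hq')]
    simp only [map_add, map_mul]
  · rw [div_add_div _ _ hq hq', eval_add, eval_mul, eval_mul, eval_mul]

lemma mul (hf : P.HasValue f a) (hg : P.HasValue g b) : P.HasValue (f * g) (a * b) := by
  obtain ⟨p, q, hq, rfl, rfl⟩ := hf
  obtain ⟨p', q', hq', rfl, rfl⟩ := hg
  exact ⟨p * p', q * q', by simp [hq, hq'], by simp only [map_mul, div_mul_div_comm],
    by simp only [eval_mul, div_mul_div_comm]⟩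

lemma inv (hf : P.HasValue f a) (ha : a ≠ 0) : P.HasValue f⁻¹ a⁻¹ := by
  obtain ⟨p, q, -, rfl, rfl⟩ := hf
  exact ⟨q, p, (div_ne_zero_iff.1 ha).1, inv_div _ _, inv_div _ _⟩

lemma neg (hf : P.HasValue f a) : P.HasValue (-f) (-a) := by
  simpa using (P.hasValue_algebraMap (-1)).mul hf

lemma sub (hf : P.HasValue f a) (hg : P.HasValue g b) : P.HasValue (f - g) (a - b) := by
  simpa only [sub_eq_add_neg] using hf.add hg.neg

lemma div (hf : P.HasValue f a) (hg : P.HasValue g b) (hb : b ≠ 0) :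
    P.HasValue (f / g) (a / b) := by
  simpa only [div_eq_mul_inv] using hf.mul (hg.inv hb)

lemma pow (hf : P.HasValue f a) (n : ℕ) : P.HasValue (f ^ n) (a ^ n) := by
  induction n with
  | zero => simpa using P.hasValue_one
  | succ n ih => simpa only [pow_succ] using ih.mul hf

lemma sum {ι : Type*} {s : Finset ι} {f : ι → K} {a : ι → k}
    (h : ∀ i ∈ s, P.HasValue (f i) (a i)) : P.HasValue (∑ i ∈ s, f i) (∑ i ∈ s, a i) := by
  classical
  induction s using Finset.induction_on with
  | empty => simpa using P.hasValue_zero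
  | insert i s hi ih =>
    rw [Finset.sum_insert hi, Finset.sum_insert hi]
    exact (h i (Finset.mem_insert_self i s)).add
      (ih fun j hj => h j (Finset.mem_insert_of_mem hj))

lemma ne_zero (hf : P.HasValue f a) (ha : a ≠ 0) : f ≠ 0 := by
  rintro rfl
  exact ha (hf.unique P.hasValue_zero)

end HasValue

namespace Regular

lemma congr (hf : P.Regular f) (hfg : f = g) : P.Regular g := hfg ▸ hf

lemma add (hf : P.Regular f) (hg : P.Regular g) : P.Regular (f + g) :=
  let ⟨_, hf⟩ := hf; let ⟨_, hg⟩ := hg; (hf.add hg).regular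

lemma sub (hf : P.Regular f) (hg : P.Regular g) : P.Regular (f - g) :=
  let ⟨_, hf⟩ := hf; let ⟨_, hg⟩ := hg; (hf.sub hg).regular

lemma neg (hf : P.Regular f) : P.Regular (-f) :=
  let ⟨_, hf⟩ := hf; hf.neg.regular

lemma mul (hf : P.Regular f) (hg : P.Regular g) : P.Regular (f * g) :=
  let ⟨_, hf⟩ := hf; let ⟨_, hg⟩ := hg; (hf.mul hg).regular

lemma pow (hf : P.Regular f) (n : ℕ) : P.Regular (f ^ n) :=
  let ⟨_, hf⟩ := hf; (hf.pow n).regular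

lemma div (hf : P.Regular f) (hg : P.HasValue g b) (hb : b ≠ 0) : P.Regular (f / g) :=
  let ⟨_, hf⟩ := hf; (hf.div hg hb).regular

end Regular

lemma regular_algebraMap (P : RationalPlace k K) (a : k) : P.Regular (algebraMap k K a) :=
  (P.hasValue_algebraMap a).regular

lemma regular_one (P : RationalPlace k K) : P.Regular 1 := P.hasValue_one.regular

lemma regular_ofNat (P : RationalPlace k K) (n : ℕ) [n.AtLeastTwo] : P.Regular (OfNat.ofNat n) :=
  (P.hasValue_ofNat n).regular

lemma regular_x (P : RationalPlace k K) : P.Regular P.x := P.hasValue_x.regular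

lemma exists_aeval_x_eq_pow_mul (P : RationalPlace k K) {p : k[X]} (hp : p ≠ 0) :
    ∃ (n : ℕ) (e : K) (a : k), P.HasValue e a ∧ a ≠ 0 ∧ aeval P.x p = P.x ^ n * e := by
  obtain ⟨q, hpq, hq⟩ := exists_eq_pow_rootMultiplicity_mul_and_not_dvd p hp 0
  refine ⟨p.rootMultiplicity 0, aeval P.x q, q.eval 0, P.hasValue_aeval q,
    fun h => hq (dvd_iff_isRoot.2 h), ?_⟩
  simpa only [C_0, sub_zero, map_mul, map_pow, aeval_X] using congrArg (aeval P.x) hpq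

lemma exists_eq_zpow_mul (P : RationalPlace k K) (hf : f ≠ 0) :
    ∃ (n : ℤ) (e : K) (a : k), P.HasValue e a ∧ a ≠ 0 ∧ f = P.x ^ n * e := by
  obtain ⟨p, q, rfl⟩ := (mem_adjoin_simple_iff k f).1 (P.adjoin_x ▸ IntermediateField.mem_top)
  have hp : p ≠ 0 := by rintro rfl; simp at hf
  have hq : q ≠ 0 := by rintro rfl; simp at hf
  obtain ⟨n, d, a, hd, ha, hp⟩ := P.exists_aeval_x_eq_pow_mul hp
  obtain ⟨m, e, b, he, hb, hq⟩ := P.exists_aeval_x_eq_pow_mul hq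
  refine ⟨n - m, d / e, a / b, hd.div he hb, div_ne_zero ha hb, ?_⟩
  rw [hp, hq, zpow_sub₀ P.x_ne_zero, zpow_natCast, zpow_natCast, mul_div_mul_comm]

namespace HasPole

variable {n : ℕ} {m : k}

lemma ne_zero (hf : P.HasPole f n m) : f ≠ 0 :=
  right_ne_zero_of_mul (hf.hasValue.ne_zero hf.leading_ne_zero)

lemma hasValue_inv (hf : P.HasPole f n m) : P.HasValue f⁻¹ 0 := by
  have := P.x_ne_zero
  have := hf.ne_zero
  refine ((P.hasValue_x.pow n).div hf.hasValue hf.leading_ne_zero).congr (by field_simp) ?_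
  simp [hf.order_ne_zero]

lemma not_regular (hf : P.HasPole f n m) : ¬ P.Regular f := by
  rintro ⟨a, ha⟩
  have h := (hf.hasValue_inv.mul ha).congr (inv_mul_cancel₀ hf.ne_zero) (zero_mul a)
  exact zero_ne_one (h.unique P.hasValue_one)

lemma order_le (hf : P.HasPole f n m) {j : ℕ} (hj : P.Regular (P.x ^ j * f)) : n ≤ j := by
  by_contra! hlt
  obtain ⟨a, ha⟩ := hj
  obtain ⟨d, rfl⟩ := Nat.exists_eq_add_of_lt hlt
  refine hf.leading_ne_zero (hf.hasValue.unique (((P.hasValue_x.pow (d + 1)).mul ha).congr ?_ ?_))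
  · ring
  · simp

lemma hasValue_pow_mul_of_lt (hf : P.HasPole f n m) {j : ℕ} (hj : n < j) :
    P.HasValue (P.x ^ j * f) 0 := by
  obtain ⟨d, rfl⟩ := Nat.exists_eq_add_of_lt hj
  exact ((P.hasValue_x.pow (d + 1)).mul hf.hasValue).congr (by ring) (by simp)

end HasPole

lemma regular_or_hasPole (P : RationalPlace k K) (f : K) :
    P.Regular f ∨ ∃ n m, P.HasPole f n m := by
  by_cases hf : f = 0
  · exact .inl (hf ▸ P.hasValue_zero.regular)
  obtain ⟨n, e, a, he, ha, rfl⟩ := P.exists_eq_zpow_mul hf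
  rcases le_or_gt 0 n with hn | hn
  · lift n to ℕ using hn
    exact .inl (((P.regular_x.pow n).mul he.regular).congr (by rw [zpow_natCast]))
  · obtain ⟨j, rfl⟩ := Int.eq_negSucc_of_lt_zero hn
    have := P.x_ne_zero
    exact .inr ⟨j + 1, a, j.succ_ne_zero, ha, he.congr (by rw [zpow_negSucc]; field_simp) rfl⟩

lemma exists_hasPole (hf : ¬ P.Regular f) : ∃ n m, P.HasPole f n m :=
  (P.regular_or_hasPole f).resolve_left hf

lemma ne_zero_of_not_regular (hf : ¬ P.Regular f) : f ≠ 0 := by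
  rintro rfl
  exact hf P.hasValue_zero.regular

lemma hasValue_inv_of_not_regular (hf : ¬ P.Regular f) : P.HasValue f⁻¹ 0 :=
  let ⟨_, _, h⟩ := P.exists_hasPole hf
  h.hasValue_inv

lemma regular_inv_of_not_hasValue_zero (hf : ¬ P.HasValue f 0) : P.Regular f⁻¹ := by
  obtain ⟨a, ha⟩ | ⟨n, m, h⟩ := P.regular_or_hasPole f
  · exact (ha.inv fun h => hf (h ▸ ha)).regular
  · exact h.hasValue_inv.regular

lemma HasValue.exists_eq_x_mul (hf : P.HasValue f 0) : ∃ g, P.Regular g ∧ f = P.x * g := by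
  have hx := P.x_ne_zero
  refine ⟨f / P.x, ?_, by field_simp⟩
  obtain h | ⟨n, m, h⟩ := P.regular_or_hasPole (f / P.x)
  · exact h
  obtain ⟨j, rfl⟩ := Nat.exists_eq_add_one_of_ne_zero h.order_ne_zero
  refine absurd (h.hasValue.unique (((P.hasValue_x.pow j).mul hf).congr ?_ (mul_zero _)))
    h.leading_ne_zero
  field_simp
  ring

lemma regular_of_hasValue_x_mul (hf : P.HasValue (P.x * f) 0) : P.Regular f := by
  obtain ⟨g, hg, h⟩ := hf.exists_eq_x_mul
  exact hg.congr (mul_left_cancel₀ P.x_ne_zero h).symm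

lemma inv_x_mul_ne_sq_mul (hf : ¬ P.Regular f) (hg : P.Regular g) {c : K} (hc : P.HasValue c a)
    (ha : a ≠ 0) : P.x⁻¹ * g ≠ f ^ 2 * c := by
  intro h
  obtain ⟨n, m, hf⟩ := P.exists_hasPole hf
  obtain ⟨j, rfl⟩ := Nat.exists_eq_add_one_of_ne_zero hf.order_ne_zero
  obtain ⟨b, hb⟩ := hg
  refine mul_ne_zero (pow_ne_zero 2 hf.leading_ne_zero) ha
    (((hf.hasValue.pow 2).mul hc).unique (((P.hasValue_x.pow (2 * j + 1)).mul hb).congr ?_ ?_))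
  · have hx := P.x_ne_zero
    rw [mul_pow, mul_assoc, ← h]
    field_simp
    ring
  · simp

end RationalPlace

/-! ### Logarithmic derivations at a place -/

/-- A place of `K` together with a derivation that acts near it as `κ x d/dx` to leading order, so
that it preserves the orders of zeros and poles. -/
structure LogPlace (k K : Type*) [Field k] [Field K] [Algebra k K] extends RationalPlace k K where
  θ : Derivation k K K
  κ : k
  κ_ne_zero : κ ≠ 0
  hasValue_θ_x_div_x : toRationalPlace.HasValue (θ x / x) κ

namespace LogPlace

open RationalPlace

variable {k K : Type*} [Field k] [Field K] [Algebra k K] {P : LogPlace k K}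
  {f g : K} {a b m : k} {n : ℕ}

/-- The logarithmic derivative of `f` with respect to `P.θ`, which is `0` for `f = 0`. -/
def logDeriv (P : LogPlace k K) (f : K) : K := P.θ f / f

lemma mul_logDeriv (P : LogPlace k K) (f : K) : f * P.logDeriv f = P.θ f := by
  obtain rfl | hf := eq_or_ne f 0
  · simp
  · exact mul_div_cancel₀ _ hf

lemma logDeriv_mul (P : LogPlace k K) (hf : f ≠ 0) (hg : g ≠ 0) :
    P.logDeriv (f * g) = P.logDeriv f + P.logDeriv g := by
  simp only [logDeriv, Derivation.leibniz, smul_eq_mul]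
  field_simp
  ring

lemma logDeriv_inv (P : LogPlace k K) (f : K) : P.logDeriv f⁻¹ = -P.logDeriv f := by
  obtain rfl | hf := eq_or_ne f 0
  · simp [logDeriv]
  · simp only [logDeriv, Derivation.leibniz_inv, smul_eq_mul]
    field_simp

lemma logDeriv_x_pow (P : LogPlace k K) (n : ℕ) : P.logDeriv (P.x ^ n) = n * P.logDeriv P.x := by
  induction n with
  | zero => simp [logDeriv]
  | succ n ih =>
    rw [pow_succ, logDeriv_mul P (pow_ne_zero n P.x_ne_zero) P.x_ne_zero, ih]
    push_cast
    ring

lemma hasValue_logDeriv_x (P : LogPlace k K) : P.HasValue (P.logDeriv P.x) P.κ :=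
  P.hasValue_θ_x_div_x

lemma hasValue_θ (hf : P.HasValue f a) : P.HasValue (P.θ f) 0 := by
  obtain ⟨p, q, hq, rfl, rfl⟩ := hf
  have hθx : P.HasValue (P.θ P.x) 0 :=
    (P.hasValue_x.mul P.hasValue_logDeriv_x).congr (P.mul_logDeriv P.x) (zero_mul _)
  have hθ (r : k[X]) : P.HasValue (P.θ (aeval P.x r)) 0 :=
    ((P.hasValue_aeval (derivative r)).mul hθx).congr
      (by rw [Derivation.map_aeval, smul_eq_mul]) (mul_zero _)
  have hp := P.hasValue_aeval p
  have hq' := P.hasValue_aeval q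
  refine (((hq'.mul (hθ p)).sub (hp.mul (hθ q))).div (hq'.pow 2) (pow_ne_zero 2 hq)).congr ?_ ?_
  · rw [Derivation.leibniz_div, smul_eq_mul, smul_eq_mul, smul_eq_mul, div_eq_inv_mul, inv_pow]
  · simp

lemma hasValue_logDeriv (hf : P.HasValue f a) (ha : a ≠ 0) : P.HasValue (P.logDeriv f) 0 :=
  ((hasValue_θ hf).div hf ha).congr rfl (zero_div a)

lemma hasValue_logDeriv_x_pow_mul (hf : P.HasValue f a) (ha : a ≠ 0) (n : ℕ) :
    P.HasValue (P.logDeriv (P.x ^ n * f)) (n * P.κ) := by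
  rw [logDeriv_mul P (pow_ne_zero n P.x_ne_zero) (hf.ne_zero ha), logDeriv_x_pow]
  simpa using ((P.hasValue_algebraMap (n : k)).mul P.hasValue_logDeriv_x).add
    (hasValue_logDeriv hf ha)

lemma hasValue_logDeriv_of_hasPole (hf : P.HasPole f n m) :
    P.HasValue (P.logDeriv f) (-(n * P.κ)) := by
  have hx := pow_ne_zero n P.x_ne_zero
  have h := hasValue_logDeriv hf.hasValue hf.leading_ne_zero
  rw [logDeriv_mul P hx hf.ne_zero, logDeriv_x_pow] at h
  refine (h.sub ((P.hasValue_algebraMap (n : k)).mul P.hasValue_logDeriv_x)).congr ?_ (zero_sub _)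
  rw [map_natCast, add_sub_cancel_left]

lemma regular_logDeriv (P : LogPlace k K) (f : K) : P.Regular (P.logDeriv f) := by
  obtain rfl | hf := eq_or_ne f 0
  · exact P.hasValue_zero.regular.congr (by simp [logDeriv])
  obtain ⟨n, e, a, he, ha, rfl⟩ := P.exists_eq_zpow_mul hf
  obtain ⟨j, rfl | rfl⟩ := n.eq_nat_or_neg
  · simpa only [zpow_natCast] using (hasValue_logDeriv_x_pow_mul he ha j).regular
  · obtain ⟨_, h⟩ := (hasValue_logDeriv_x_pow_mul (he.inv ha) (inv_ne_zero ha) j).regular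
    refine h.neg.regular.congr ?_
    rw [← logDeriv_inv, mul_inv, inv_inv, zpow_neg, zpow_natCast]

lemma hasValue_mul_logDeriv_x_pow_mul (hf : P.HasValue f a) (n : ℕ) :
    P.HasValue (f * P.logDeriv (P.x ^ n * f)) (a * (n * P.κ)) := by
  obtain rfl | ha := eq_or_ne a 0
  · obtain ⟨_, h⟩ := P.regular_logDeriv (P.x ^ n * f)
    exact (hf.mul h).congr rfl (by simp)
  · exact hf.mul (hasValue_logDeriv_x_pow_mul hf ha n)

section CharZero

variable [CharZero k]

lemma natCast_mul_κ_ne_zero (P : LogPlace k K) (hn : n ≠ 0) : (n : k) * P.κ ≠ 0 :=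
  mul_ne_zero (Nat.cast_ne_zero.2 hn) P.κ_ne_zero

lemma regular_of_regular_θ (hf : P.Regular (P.θ f)) : P.Regular f := by
  obtain h | ⟨n, m, h⟩ := P.regular_or_hasPole f
  · exact h
  have hl := hasValue_logDeriv_of_hasPole h
  have hl0 := neg_ne_zero.2 (P.natCast_mul_κ_ne_zero h.order_ne_zero)
  refine (hf.div hl hl0).congr ?_
  rw [← P.mul_logDeriv, mul_div_cancel_right₀ _ (hl.ne_zero hl0)]

lemma hasValue_x_mul_of_hasValue_x_mul_θ (hf : P.HasValue (P.x * P.θ f) b) :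
    P.HasValue (P.x * f) (-b / P.κ) := by
  obtain ⟨a, h⟩ | ⟨n, m, h⟩ := P.regular_or_hasPole f
  · have hb := hf.unique (P.hasValue_x.mul (hasValue_θ h))
    exact (P.hasValue_x.mul h).congr rfl (by simp [hb])
  have hl := hasValue_logDeriv_of_hasPole h
  have hl0 := neg_ne_zero.2 (P.natCast_mul_κ_ne_zero h.order_ne_zero)
  have hxf : P.HasValue (P.x * f) (b / -(n * P.κ)) := by
    refine (hf.div hl hl0).congr ?_ rfl
    rw [← P.mul_logDeriv, ← mul_assoc, mul_div_cancel_right₀ _ (hl.ne_zero hl0)]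
  have hn : n = 1 :=
    le_antisymm (h.order_le (j := 1) (by simpa using hxf.regular))
      (Nat.one_le_iff_ne_zero.2 h.order_ne_zero)
  exact hxf.congr rfl (by rw [hn, Nat.cast_one, one_mul, div_neg, neg_div])

end CharZero

end LogPlace

/-! ### The places and the Euler derivation of `k(X)` -/

section Derivative

variable {k : Type*} [Field k]

/-- The derivation `d/dX` of `k(X)`, obtained by extending the one of `k[X]` along the formally
étale map `k[X] → k(X)`. -/
noncomputable def ratFuncDeriv (k : Type*) [Field k] : Derivation k (RatFunc k) (RatFunc k) :=
  have := Algebra.FormallyEtale.of_isLocalization (Rₘ := RatFunc k) (nonZeroDivisors k[X])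
  ((((Algebra.linearMap k[X] (RatFunc k)).comp
    (KaehlerDifferential.polynomialEquiv k).toLinearMap).liftBaseChange (RatFunc k)).comp
    (KaehlerDifferential.tensorKaehlerEquivOfFormallyEtale k k[X]
      (RatFunc k)).symm.toLinearMap).compDer (KaehlerDifferential.D k (RatFunc k))

lemma ratFuncDeriv_algebraMap (p : k[X]) :
    ratFuncDeriv k (algebraMap k[X] (RatFunc k) p)
      = algebraMap k[X] (RatFunc k) (derivative p) := by
  simp [ratFuncDeriv, KaehlerDifferential.tensorKaehlerEquivOfFormallyEtale_symm_D_algebraMap,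
    KaehlerDifferential.polynomialEquiv_D]

lemma ratFuncDeriv_X : ratFuncDeriv k RatFunc.X = 1 := by
  rw [← RatFunc.algebraMap_X, ratFuncDeriv_algebraMap, derivative_X, map_one]

lemma ratFuncDeriv_X_sub_C (c : k) : ratFuncDeriv k (RatFunc.X - RatFunc.C c) = 1 := by
  rw [map_sub, ratFuncDeriv_X, ← RatFunc.algebraMap_eq_C, Derivation.map_algebraMap, sub_zero]

/-- The derivation `X d/dX` of `k(X)`. -/
noncomputable def eulerDeriv (k : Type*) [Field k] : Derivation k (RatFunc k) (RatFunc k) :=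
  (RatFunc.X : RatFunc k) • ratFuncDeriv k

lemma eulerDeriv_apply (f : RatFunc k) : eulerDeriv k f = RatFunc.X * ratFuncDeriv k f := rfl

lemma eulerDeriv_X : eulerDeriv k RatFunc.X = RatFunc.X := by
  rw [eulerDeriv_apply, ratFuncDeriv_X, mul_one]

end Derivative

section Adjoin

variable {k : Type*} [Field k] {f : RatFunc k}

lemma transcendental_of_adjoin_eq_top (hf : k⟮f⟯ = ⊤) : Transcendental k f := fun h =>
  RatFunc.transcendental_X <| IntermediateField.isAlgebraic_iff.1 <|
    (IntermediateField.isAlgebraic_adjoin_simple h.isIntegral).isAlgebraic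
      ⟨RatFunc.X, hf ▸ IntermediateField.mem_top⟩

lemma adjoin_eq_top_of_X_mem (h : RatFunc.X ∈ k⟮f⟯) : k⟮f⟯ = ⊤ := by
  rwa [eq_top_iff, ← RatFunc.adjoin_X, IntermediateField.adjoin_simple_le_iff]

lemma adjoin_X_sub_C (c : k) : k⟮RatFunc.X - RatFunc.C c⟯ = ⊤ :=
  adjoin_eq_top_of_X_mem <| by
    have hc : RatFunc.C c ∈ k⟮RatFunc.X - RatFunc.C c⟯ := IntermediateField.algebraMap_mem _ c
    simpa using add_mem (IntermediateField.mem_adjoin_simple_self k _) hc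

lemma adjoin_inv_X : k⟮(RatFunc.X : RatFunc k)⁻¹⟯ = ⊤ :=
  adjoin_eq_top_of_X_mem <| by
    simpa using inv_mem (IntermediateField.mem_adjoin_simple_self k (RatFunc.X : RatFunc k)⁻¹)

end Adjoin

namespace RationalPlace

variable {k : Type*} [Field k] {f g : RatFunc k} {a c : k}

/-- The finite place `X = c` of `k(X)`. -/
@[simps]
noncomputable def point (c : k) : RationalPlace k (RatFunc k) where
  x := RatFunc.X - RatFunc.C c
  transcendental_x := transcendental_of_adjoin_eq_top (adjoin_X_sub_C c)
  adjoin_x := adjoin_X_sub_C c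

/-- The place `X = ∞` of `k(X)`. -/
@[simps]
noncomputable def infinity (k : Type*) [Field k] : RationalPlace k (RatFunc k) where
  x := RatFunc.X⁻¹
  transcendental_x := transcendental_of_adjoin_eq_top adjoin_inv_X
  adjoin_x := adjoin_inv_X

lemma hasValue_point_algebraMap (c : k) (p : k[X]) :
    (point c).HasValue (algebraMap k[X] (RatFunc k) p) (p.eval c) := by
  refine ((point c).hasValue_aeval (p.comp (X + C c))).congr ?_ (by simp)
  rw [aeval_comp]
  simp [RatFunc.aeval_X_left_eq_algebraMap]

lemma hasValue_point_X (c : k) : (point c).HasValue RatFunc.X c := by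
  simpa using hasValue_point_algebraMap c X

lemma hasValue_point_iff :
    (point c).HasValue f a ↔ f.denom.eval c ≠ 0 ∧ f.num.eval c / f.denom.eval c = a := by
  refine ⟨?_, fun ⟨h, ha⟩ => ?_⟩
  · rintro ⟨p, q, hq, rfl, rfl⟩
    have h_comp (r : k[X]) : aeval (point c).x r = algebraMap k[X] _ (r.comp (X - C c)) := by
      rw [← RatFunc.aeval_X_left_eq_algebraMap, aeval_comp]
      simp
    have hq' : (q.comp (X - C c)).eval c ≠ 0 := by simpa using hq
    rw [h_comp, h_comp]
    set f := algebraMap k[X] (RatFunc k) (p.comp (X - C c)) / algebraMap k[X] _ (q.comp (X - C c))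
    have hd : f.denom.eval c ≠ 0 := fun h =>
      hq' (eval_eq_zero_of_dvd_of_eval_eq_zero (RatFunc.denom_div_dvd _ _) h)
    have h_num := congrArg (eval c) ((RatFunc.num_mul_eq_mul_denom_iff (x := f)
      (by rintro h; simp [h] at hq')).2 rfl)
    refine ⟨hd, ?_⟩
    rw [div_eq_div_iff hd hq]
    simpa using h_num
  · exact ((hasValue_point_algebraMap c f.num).div (hasValue_point_algebraMap c f.denom) h).congr
      f.num_div_denom ha

lemma eq_of_forall_hasValue_point [Infinite k] {d : k[X]} (hd : d ≠ 0)
    (h : ∀ c, d.eval c ≠ 0 → ∃ a, (point c).HasValue f a ∧ (point c).HasValue g a) : f = g := by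
  suffices (f - g).num * d = 0 by
    simpa [hd, sub_eq_zero] using this
  refine Polynomial.zero_of_eval_zero _ fun c => ?_
  obtain hc | hc := eq_or_ne (d.eval c) 0
  · simp [hc]
  · obtain ⟨a, hf, hg⟩ := h c hc
    have := hasValue_point_iff.1 ((hf.sub hg).congr rfl (sub_self a))
    simpa [this.1, hc] using this.2

lemma hasValue_infinity_inv_X_sub_C (c : k) :
    (infinity k).HasValue (RatFunc.X - RatFunc.C c)⁻¹ 0 := by
  have h := (infinity k).hasValue_one.sub
    (((infinity k).hasValue_algebraMap c).mul (infinity k).hasValue_x)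
  refine ((infinity k).hasValue_x.div h (by simp)).congr ?_ (by simp)
  have := RatFunc.X_ne_zero (K := k)
  rw [infinity_x, RatFunc.algebraMap_eq_C]
  field_simp

lemma exists_eq_algebraMap_of_regular [IsAlgClosed k] (h : ∀ c, (point c).Regular f) :
    ∃ p : k[X], f = algebraMap k[X] (RatFunc k) p := by
  have h_degree : f.denom.degree = 0 := by
    by_contra h_degree
    obtain ⟨c, hc⟩ := IsAlgClosed.exists_root _ h_degree
    obtain ⟨_, hf⟩ := h c
    exact (hasValue_point_iff.1 hf).1 hc
  have h_denom : f.denom = 1 := f.monic_denom.degree_le_zero_iff_eq_one.1 h_degree.le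
  exact ⟨f.num, by simpa [h_denom] using f.num_div_denom.symm⟩

lemma eq_C_of_hasValue_infinity (p : k[X]) :
    ∀ {a : k}, (infinity k).HasValue (algebraMap k[X] (RatFunc k) p) a → p = C a := by
  have hx := (infinity k).hasValue_x
  induction p using Polynomial.recOnHorner with
  | M0 =>
    intro a h
    rw [map_zero] at h
    rw [h.unique (infinity k).hasValue_zero, C_0]
  | MC p b _ _ ih =>
    intro a h
    have hb := h.sub ((infinity k).hasValue_algebraMap b)
    rw [ih (hb.congr (by simp [RatFunc.algebraMap_eq_C]) rfl), C_sub, sub_add_cancel]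
  | MX p hp ih =>
    intro a h
    refine absurd (ih ((h.mul hx).congr ?_ (mul_zero a))) (by rwa [C_0])
    rw [map_mul, RatFunc.algebraMap_X, infinity_x, mul_inv_cancel_right₀ RatFunc.X_ne_zero]

lemma hasValue_point_X_sub_C_mul_div (a b c : k) [Decidable (b = c)] :
    (point c).HasValue ((RatFunc.X - RatFunc.C c) * (RatFunc.C a / (RatFunc.X - RatFunc.C b)))
      (if b = c then a else 0) := by
  have ha := (point c).hasValue_algebraMap a
  obtain rfl | hbc := eq_or_ne b c
  · exact ha.congr (mul_div_cancel₀ (RatFunc.C a) (point b).x_ne_zero).symm (if_pos rfl).symm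
  · have hb := (hasValue_point_X c).sub ((point c).hasValue_algebraMap b)
    exact ((point c).hasValue_x.mul (ha.div hb (sub_ne_zero.2 hbc.symm))).congr
      (by simp [RatFunc.algebraMap_eq_C]) (by rw [if_neg hbc, zero_mul])

/-- Partial fractions: the difference of the two sides has no pole at all and vanishes at
infinity. -/
lemma eq_add_sum_div_of_hasValue [IsAlgClosed k] {r : k → k}
    (h : ∀ c, (point c).HasValue ((RatFunc.X - RatFunc.C c) * f) (r c))
    (h_infinity : (infinity k).HasValue f a) :
    ∃ s : Finset k, f = RatFunc.C a + ∑ c ∈ s, RatFunc.C (r c) / (RatFunc.X - RatFunc.C c) := by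
  classical
  set s := f.denom.roots.toFinset with hs
  refine ⟨s, ?_⟩
  set g := ∑ c ∈ s, RatFunc.C (r c) / (RatFunc.X - RatFunc.C c) with hg
  have hr (c : k) (hc : c ∉ s) : r c = 0 := by
    have hf : (point c).HasValue f _ := hasValue_point_iff.2 ⟨fun h_root => hc <| by
      simpa [hs, f.denom_ne_zero] using h_root, rfl⟩
    simpa using (h c).unique ((point c).hasValue_x.mul hf)
  have h_regular (c : k) : (point c).Regular (f - g) := by
    have h_sum := HasValue.sum (s := s) fun b _ => hasValue_point_X_sub_C_mul_div (r b) b c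
    rw [← Finset.mul_sum, Finset.sum_ite_eq', ← hg] at h_sum
    refine regular_of_hasValue_x_mul (((h c).sub h_sum).congr (mul_sub _ _ _).symm ?_)
    split_ifs with hc
    · exact sub_self _
    · rw [hr c hc, sub_zero]
  obtain ⟨p, hp⟩ := exists_eq_algebraMap_of_regular h_regular
  have hg_infinity : (infinity k).HasValue g 0 :=
    (HasValue.sum (s := s) fun c _ => ((infinity k).hasValue_algebraMap (r c)).mul
      (hasValue_infinity_inv_X_sub_C c)).congr (by simp [hg, div_eq_mul_inv,
        RatFunc.algebraMap_eq_C]) (by simp)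
  have h_const := eq_C_of_hasValue_infinity p
    ((h_infinity.sub hg_infinity).congr hp (sub_zero a))
  rw [← sub_eq_iff_eq_add, hp, h_const, RatFunc.algebraMap_C]

end RationalPlace

namespace LogPlace

variable {k : Type*} [Field k]

/-- The place `X = 0` with the derivation `X d/dX`. -/
@[simps toRationalPlace]
noncomputable def eulerZero (k : Type*) [Field k] : LogPlace k (RatFunc k) where
  toRationalPlace := RationalPlace.point 0
  θ := eulerDeriv k
  κ := 1
  κ_ne_zero := one_ne_zero
  hasValue_θ_x_div_x := by
    refine (RationalPlace.point 0).hasValue_one.congr ?_ rfl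
    rw [RationalPlace.point_x, map_zero, sub_zero, eulerDeriv_X, div_self RatFunc.X_ne_zero]

/-- The place `X = ∞` with the derivation `X d/dX`. -/
@[simps! x toRationalPlace]
noncomputable def eulerInfinity (k : Type*) [Field k] : LogPlace k (RatFunc k) where
  toRationalPlace := RationalPlace.infinity k
  θ := eulerDeriv k
  κ := -1
  κ_ne_zero := neg_ne_zero.2 one_ne_zero
  hasValue_θ_x_div_x := by
    refine (RationalPlace.infinity k).hasValue_one.neg.congr ?_ rfl
    have := RatFunc.X_ne_zero (K := k)
    rw [RationalPlace.infinity_x, Derivation.leibniz_inv, eulerDeriv_X, smul_eq_mul]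
    field_simp

/-- The place `X = c`, where `c ≠ 0`, with the derivation `(X - c) X d/dX`. -/
noncomputable def eulerPoint {c : k} (hc : c ≠ 0) : LogPlace k (RatFunc k) where
  toRationalPlace := RationalPlace.point c
  θ := (RationalPlace.point c).x • eulerDeriv k
  κ := c
  κ_ne_zero := hc
  hasValue_θ_x_div_x := by
    refine (RationalPlace.hasValue_point_X c).congr ?_ rfl
    rw [Derivation.smul_apply, smul_eq_mul, mul_div_cancel_left₀ _ (RationalPlace.x_ne_zero _),
      eulerDeriv_apply, RationalPlace.point_x, ratFuncDeriv_X_sub_C, mul_one]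

end LogPlace

/-! ### The Sasano system at a place -/

/-- A solution of the Sasano system for a derivation `θ`, in the coordinates `qᵢ = u Qᵢ` and with
the derivation `θ = u δ`, where `(Q₁, p₁, Q₂, p₂)` solves the original system with `δ = t d/dt`;
then `τ = u² t`. At a point `c ≠ 0` the choice of a local parameter for `u` turns the irregular
terms of the system into regular ones. -/
structure ScaledSolution {k K : Type*} [Field k] [Field K] [Algebra k K]
    (θ : Derivation k K K) where
  (a₀ a₁ a₃ : k)
  (u τ q₁ p₁ q₂ p₂ : K)
  τ_ne_zero : τ ≠ 0
  θ_q₁ : θ q₁ = q₁ * (2 * (q₁ * p₁ + q₂ * p₂) + u * algebraMap k K (a₀ + a₁ + a₃) + θ u / u - q₁)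
    + τ * (4 * p₂ - 1)
  θ_p₁ : θ p₁ = p₁ * (2 * q₁ - (2 * (q₁ * p₁ + q₂ * p₂) + u * algebraMap k K (a₀ + a₁ + a₃)))
    + u * algebraMap k K a₀
  θ_q₂ : θ q₂ = q₂ * (2 * (q₁ * p₁ + q₂ * p₂) + u * algebraMap k K (a₀ + a₁ + a₃) + θ u / u - q₂)
    + τ * (4 * p₁ - 1)
  θ_p₂ : θ p₂ = p₂ * (2 * q₂ - (2 * (q₁ * p₁ + q₂ * p₂) + u * algebraMap k K (a₀ + a₁ + a₃)))
    + u * algebraMap k K a₁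

namespace ScaledSolution

open RationalPlace LogPlace

variable {k K : Type*} [Field k] [Field K] [Algebra k K]

section Algebra

variable {θ : Derivation k K K} (S : ScaledSolution θ)

/-- The coefficient of the linear term that the four equations share. -/
def drift : K := 2 * (S.q₁ * S.p₁ + S.q₂ * S.p₂) + S.u * algebraMap k K (S.a₀ + S.a₁ + S.a₃)

/-- The combination of the momenta that satisfies a linear equation with parameter `a₃`. -/
def p₃ : K := S.p₁ + S.p₂ - 1

/-- The derivative of the Hamiltonian with respect to its explicit time variable. -/
def timePartial : K := 4 * S.p₁ * S.p₂ - S.p₁ - S.p₂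

/-- The Hamiltonian of an unscaled solution, that is, one with `u = 1`, where `τ` is the time. -/
def hamiltonian : K :=
  (S.q₁ * S.p₁ + S.q₂ * S.p₂) ^ 2
    + algebraMap k K (S.a₀ + S.a₁ + S.a₃) * (S.q₁ * S.p₁ + S.q₂ * S.p₂)
    - S.q₁ ^ 2 * S.p₁ - S.q₂ ^ 2 * S.p₂ - algebraMap k K S.a₀ * S.q₁ - algebraMap k K S.a₁ * S.q₂
    + S.τ * S.timePartial

/-- The involution of the system that exchanges `(q₁, p₁, a₀)` and `(q₂, p₂, a₁)`. -/
@[simps]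
def swap : ScaledSolution θ where
  a₀ := S.a₁
  a₁ := S.a₀
  a₃ := S.a₃
  u := S.u
  τ := S.τ
  q₁ := S.q₂
  p₁ := S.p₂
  q₂ := S.q₁
  p₂ := S.p₁
  τ_ne_zero := S.τ_ne_zero
  θ_q₁ := by rw [S.θ_q₂, add_comm S.a₁, add_comm (S.q₂ * S.p₂)]
  θ_p₁ := by rw [S.θ_p₂, add_comm S.a₁, add_comm (S.q₂ * S.p₂)]
  θ_q₂ := by rw [S.θ_q₁, add_comm S.a₁, add_comm (S.q₂ * S.p₂)]
  θ_p₂ := by rw [S.θ_p₁, add_comm S.a₁, add_comm (S.q₂ * S.p₂)]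

/-- The passage from a solution with `u = 1` to the coordinates scaled by `u`. -/
def scale (hS : S.u = 1) {u : K} (hu : u ≠ 0) : ScaledSolution (u • θ) where
  a₀ := S.a₀
  a₁ := S.a₁
  a₃ := S.a₃
  u := u
  τ := u ^ 2 * S.τ
  q₁ := u * S.q₁
  p₁ := S.p₁
  q₂ := u * S.q₂
  p₂ := S.p₂
  τ_ne_zero := mul_ne_zero (pow_ne_zero 2 hu) S.τ_ne_zero
  θ_q₁ := by
    simp only [Derivation.smul_apply, Derivation.leibniz, smul_eq_mul, S.θ_q₁, hS,
      Derivation.map_one_eq_zero]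
    field_simp
    ring
  θ_p₁ := by
    rw [Derivation.smul_apply, smul_eq_mul, S.θ_p₁, hS]
    ring
  θ_q₂ := by
    simp only [Derivation.smul_apply, Derivation.leibniz, smul_eq_mul, S.θ_q₂, hS,
      Derivation.map_one_eq_zero]
    field_simp
    ring
  θ_p₂ := by
    rw [Derivation.smul_apply, smul_eq_mul, S.θ_p₂, hS]
    ring

lemma drift_swap : S.swap.drift = S.drift := by
  simp only [drift, swap_q₁, swap_q₂, swap_p₁, swap_p₂, swap_u, swap_a₀, swap_a₁, swap_a₃,
    add_comm S.a₁, add_comm (S.q₂ * S.p₂)]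

lemma timePartial_swap : S.swap.timePartial = S.timePartial := by
  simp only [timePartial, swap_p₁, swap_p₂]
  ring

lemma θ_p₃ : θ S.p₃ = -(S.drift * S.p₃) - S.u * algebraMap k K S.a₃ := by
  simp only [p₃, drift, map_sub, map_add, S.θ_p₁, S.θ_p₂, Derivation.map_one_eq_zero]
  ring

/-- Along a solution of Hamilton's equations only the explicit time dependence contributes. -/
lemma θ_hamiltonian (hu : S.u = 1) : θ S.hamiltonian = S.timePartial * θ S.τ := by
  have h₁ := S.θ_q₁
  have h₂ := S.θ_p₁
  have h₃ := S.θ_q₂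
  have h₄ := S.θ_p₂
  have h_four : θ 4 = 0 := by exact_mod_cast θ.map_natCast 4
  simp only [hu, Derivation.map_one_eq_zero] at h₁ h₂ h₃ h₄
  simp only [hamiltonian, timePartial, map_add, map_sub, Derivation.leibniz, Derivation.leibniz_pow,
    Derivation.map_algebraMap, h_four, smul_eq_mul, nsmul_eq_mul, h₁, h₂, h₃, h₄]
  push_cast
  ring

end Algebra

section Poles

variable {P : LogPlace k K} {S : ScaledSolution P.θ} {m : k} {n : ℕ}

lemma q₁_mul_eq (S : ScaledSolution P.θ) :
    S.q₁ * (P.logDeriv S.q₁ - S.drift - P.logDeriv S.u + S.q₁) = S.τ * (4 * S.p₂ - 1) := by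
  have h := P.mul_logDeriv S.q₁
  rw [S.θ_q₁] at h
  simp only [drift, LogPlace.logDeriv] at h ⊢
  linear_combination h

lemma p₁_mul_eq (S : ScaledSolution P.θ) :
    S.p₁ * (P.logDeriv S.p₁ - 2 * S.q₁ + S.drift) = S.u * algebraMap k K S.a₀ := by
  have h := P.mul_logDeriv S.p₁
  rw [S.θ_p₁] at h
  rw [drift]
  linear_combination h

lemma two_mul_q₁_sub_drift_eq (hp : S.p₁ ≠ 0) :
    2 * S.q₁ - S.drift = P.logDeriv S.p₁ - S.u * algebraMap k K S.a₀ * S.p₁⁻¹ := by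
  rw [← S.p₁_mul_eq]
  field_simp
  ring

lemma drift_eq (hp : S.p₃ ≠ 0) :
    S.drift = -P.logDeriv S.p₃ - S.u * algebraMap k K S.a₃ * S.p₃⁻¹ := by
  field_simp
  linear_combination P.mul_logDeriv S.p₃ + S.θ_p₃

lemma regular_two_mul_q₁_sub_drift (hu : P.Regular S.u) (hp : ¬ P.HasValue S.p₁ 0) :
    P.Regular (2 * S.q₁ - S.drift) := by
  rw [two_mul_q₁_sub_drift_eq (ne_of_apply_ne (P.HasValue · 0) (by simpa [P.hasValue_zero]))]
  exact (P.regular_logDeriv _).sub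
    ((hu.mul (P.regular_algebraMap _)).mul (regular_inv_of_not_hasValue_zero hp))

lemma regular_drift_of_not_hasValue_p₃ (hu : P.Regular S.u) (hp : ¬ P.HasValue S.p₃ 0) :
    P.Regular S.drift := by
  rw [drift_eq (ne_of_apply_ne (P.HasValue · 0) (by simpa [P.hasValue_zero]))]
  exact (P.regular_logDeriv _).neg.sub
    ((hu.mul (P.regular_algebraMap _)).mul (regular_inv_of_not_hasValue_zero hp))

lemma hasValue_two_mul_q₁_sub_drift (hu : P.Regular S.u) (hp : P.HasPole S.p₁ n m) :
    P.HasValue (2 * S.q₁ - S.drift) (-(n * P.κ)) := by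
  obtain ⟨_, hu⟩ := hu
  exact ((LogPlace.hasValue_logDeriv_of_hasPole hp).sub ((hu.mul (P.hasValue_algebraMap _)).mul
    hp.hasValue_inv)).congr (two_mul_q₁_sub_drift_eq hp.ne_zero).symm (by simp)

lemma hasValue_drift (hu : P.Regular S.u) (hp : P.HasPole S.p₃ n m) :
    P.HasValue S.drift (n * P.κ) := by
  obtain ⟨_, hu⟩ := hu
  exact ((LogPlace.hasValue_logDeriv_of_hasPole hp).neg.sub ((hu.mul (P.hasValue_algebraMap _)).mul
    hp.hasValue_inv)).congr (drift_eq hp.ne_zero).symm (by simp)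

lemma exists_eq_q₁_sq_mul (hA : P.Regular S.drift) (hq : ¬ P.Regular S.q₁) :
    ∃ c, P.HasValue c 1 ∧ S.τ * (4 * S.p₂ - 1) = S.q₁ ^ 2 * c := by
  obtain ⟨_, h⟩ := ((P.regular_logDeriv S.q₁).sub hA).sub (P.regular_logDeriv S.u)
  have hq0 := ne_zero_of_not_regular hq
  refine ⟨_, ((h.mul (hasValue_inv_of_not_regular hq)).add P.hasValue_one).congr rfl (by simp), ?_⟩
  rw [← S.q₁_mul_eq]
  field_simp

lemma exists_eq_drift_sq_mul [CharZero k] (hd : P.Regular (2 * S.q₁ - S.drift))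
    (hA : ¬ P.Regular S.drift) :
    ∃ c, P.HasValue c (-1 / 4) ∧ S.τ * (4 * S.p₂ - 1) = S.drift ^ 2 * c := by
  obtain ⟨_, hd⟩ := hd
  obtain ⟨_, h⟩ := (P.regular_logDeriv S.q₁).sub (P.regular_logDeriv S.u)
  have hA0 := ne_zero_of_not_regular hA
  have hA_inv := hasValue_inv_of_not_regular hA
  have := charZero_of_injective_algebraMap (algebraMap k K).injective
  have hqA : P.HasValue (S.q₁ / S.drift) (1 / 2) := by
    refine ((P.hasValue_one.add (hd.mul hA_inv)).div (P.hasValue_ofNat 2) two_ne_zero).congr ?_ ?_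
    · field_simp
      ring
    · simp
  refine ⟨_, (hqA.mul (((h.mul hA_inv).sub P.hasValue_one).add hqA)).congr rfl (by norm_num), ?_⟩
  rw [← S.q₁_mul_eq]
  field_simp
  ring

lemma regular_q₁_mul_p₁ [CharZero k] (hu : P.Regular S.u) (hA : P.Regular S.drift)
    (hq : ¬ P.Regular S.q₁) : P.Regular (S.q₁ * S.p₁) := by
  obtain ⟨_, h⟩ := (P.regular_logDeriv S.p₁).add hA
  have hq0 := ne_zero_of_not_regular hq
  have hc : P.HasValue ((P.logDeriv S.p₁ + S.drift) * S.q₁⁻¹ - 2) (-2) :=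
    ((h.mul (hasValue_inv_of_not_regular hq)).sub (P.hasValue_ofNat 2)).congr rfl (by simp)
  have h2 : (-2 : k) ≠ 0 := by norm_num
  refine ((hu.mul (P.regular_algebraMap S.a₀)).div hc h2).congr ?_
  rw [← S.p₁_mul_eq, div_eq_iff (hc.ne_zero h2)]
  field_simp
  ring

/-- If only `q₂` had a pole, then `p₂` would vanish to the order of that pole and the equation of
`q₂` would force `q₁ / τ`, hence `4 p₂ - 1`, to vanish as well. -/
lemma regular_q₂_of_regular_q₁ [CharZero k] (hu : P.Regular S.u) (hA : P.Regular S.drift)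
    (hq₁ : P.Regular S.q₁) : P.Regular S.q₂ := by
  by_contra hq₂
  have hA' : P.Regular S.swap.drift := S.drift_swap ▸ hA
  have hq0 := ne_zero_of_not_regular hq₂
  have hq_inv := hasValue_inv_of_not_regular hq₂
  obtain ⟨_, hqp₂⟩ : P.Regular (S.q₂ * S.p₂) := regular_q₁_mul_p₁ (S := S.swap) hu hA' hq₂
  have hp₂ : P.HasValue S.p₂ 0 := (hqp₂.mul hq_inv).congr (by field_simp) (mul_zero _)
  have := charZero_of_injective_algebraMap (algebraMap k K).injective
  have hqp₁ : P.Regular (S.q₁ * S.p₁) := by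
    refine (((hA.sub (hu.mul (P.regular_algebraMap (S.a₀ + S.a₁ + S.a₃)))).div
      (P.hasValue_ofNat 2) two_ne_zero).sub hqp₂.regular).congr ?_
    rw [drift]
    ring
  obtain ⟨c, hc, hcτ⟩ := exists_eq_q₁_sq_mul (S := S.swap) hA' hq₂
  have hc0 := hc.ne_zero one_ne_zero
  simp only [swap_τ, swap_p₂, swap_q₁] at hcτ
  obtain ⟨_, h⟩ := ((((P.regular_ofNat 4).mul hqp₁).sub hq₁).div hc one_ne_zero).mul
    ((((P.regular_logDeriv S.q₁).sub hA).sub (P.regular_logDeriv S.u)).add hq₁)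
  have h_zero : P.HasValue (4 * S.p₂ - 1) 0 := by
    refine (h.mul (hq_inv.pow 2)).congr (mul_left_cancel₀ S.τ_ne_zero ?_) (by simp)
    rw [← S.q₁_mul_eq]
    field_simp
    linear_combination
      S.q₁ * (P.logDeriv S.q₁ - S.drift - P.logDeriv S.u + S.q₁) * hcτ
  have h_neg_one := ((P.hasValue_ofNat 4).mul hp₂).sub P.hasValue_one
  simpa using h_zero.unique h_neg_one

/-- If both momenta but not their sum have poles, comparing the equations of `q₁` and `q₂` bounds
`p₂` when `A` is the dominant term in both. -/
lemma regular_drift [CharZero k] (hu : P.Regular S.u) (hp : ¬ P.Regular S.p₁) :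
    P.Regular S.drift := by
  by_cases hp₃ : P.Regular S.p₃
  swap
  · exact regular_drift_of_not_hasValue_p₃ hu fun h => hp₃ h.regular
  have hp₂ : ¬ P.Regular S.p₂ := fun h =>
    hp (((hp₃.sub h).add P.regular_one).congr (by rw [p₃]; ring))
  by_contra hA
  have hd₂ : P.Regular (2 * S.swap.q₁ - S.swap.drift) :=
    regular_two_mul_q₁_sub_drift hu fun h => hp₂ h.regular
  obtain ⟨c, hc, hcτ⟩ :=
    exists_eq_drift_sq_mul (regular_two_mul_q₁_sub_drift hu fun h => hp h.regular) hA
  obtain ⟨d, hd, hdτ⟩ := exists_eq_drift_sq_mul hd₂ (S.drift_swap ▸ hA)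
  simp only [swap_τ, swap_p₂, drift_swap] at hdτ
  have := charZero_of_injective_algebraMap (algebraMap k K).injective
  have hcd : P.HasValue (4 * (c + d)) (-2) :=
    ((P.hasValue_ofNat 4).mul (hc.add hd)).congr rfl (by norm_num)
  have h2 : (-2 : k) ≠ 0 := by norm_num
  refine hp₂ ((((((P.regular_ofNat 4).mul hp₃).add (P.regular_ofNat 3)).mul hc.regular).add
    hd.regular |>.div hcd h2).congr ?_)
  rw [div_eq_iff (hcd.ne_zero h2), p₃]
  refine mul_left_cancel₀ (mul_ne_zero S.τ_ne_zero (pow_ne_zero 2 (ne_zero_of_not_regular hA))) ?_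
  linear_combination S.τ * (4 * S.p₂ - 1) * hdτ - S.τ * (4 * S.p₁ - 1) * hcτ

lemma regular_q₁ [CharZero k] (hu : P.Regular S.u) (hp : ¬ P.Regular S.p₁) : P.Regular S.q₁ := by
  have := charZero_of_injective_algebraMap (algebraMap k K).injective
  exact (((regular_two_mul_q₁_sub_drift hu fun h => hp h.regular).add (regular_drift hu hp)).div
    (P.hasValue_ofNat 2) two_ne_zero).congr (by ring)

lemma regular_q₂ [CharZero k] (hu : P.Regular S.u) (hp : ¬ P.Regular S.p₁) : P.Regular S.q₂ :=
  regular_q₂_of_regular_q₁ hu (regular_drift hu hp) (regular_q₁ hu hp)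

lemma regular_τ_mul (hA : P.Regular S.drift) (hq : P.Regular S.q₁) :
    P.Regular (S.τ * (4 * S.p₂ - 1)) := by
  rw [← S.q₁_mul_eq]
  exact hq.mul ((((P.regular_logDeriv _).sub hA).sub (P.regular_logDeriv _)).add hq)

end Poles

section Values

variable {P : LogPlace k K} {S : ScaledSolution P.θ} {e g : K} {A b l p y e₀ : k} {n : ℕ}

lemma value_eq_of_q₁_eq (hq : S.q₁ = P.x ^ n * e) (he : P.HasValue e e₀)
    (hτ : S.τ * (4 * S.p₂ - 1) = P.x ^ n * g) (hg : P.HasValue g y) (hA : P.HasValue S.drift A)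
    (hl : P.HasValue (P.logDeriv S.u) l) (hb : P.HasValue S.q₁ b) :
    e₀ * (A + l - n * P.κ - b) + y = 0 := by
  have hx := pow_ne_zero n P.x_ne_zero
  have h := (hq ▸ hasValue_mul_logDeriv_x_pow_mul he n : P.HasValue (e * P.logDeriv S.q₁) _).unique
     (((he.mul ((hA.add hl).sub hb)).add hg).congr ?_ rfl)
  · linear_combination -h
  · refine mul_left_cancel₀ hx ?_
    linear_combination
      (P.logDeriv S.q₁ - S.drift - P.logDeriv S.u + S.q₁) * hq - hτ - S.q₁_mul_eq

lemma value_eq_of_p₁_eq (hp : P.HasValue S.p₁ p) (hb : P.HasValue S.q₁ b)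
    (hA : P.HasValue S.drift A) {ε : k} (hu : P.HasValue S.u ε) :
    p * (2 * b - A) + ε * S.a₀ = 0 := by
  refine HasValue.unique (P := P.toRationalPlace) (HasValue.congr ?_ S.θ_p₁.symm rfl)
    (hasValue_θ hp)
  exact (hp.mul (((P.hasValue_ofNat 2).mul hb).sub hA)).add (hu.mul (P.hasValue_algebraMap _))

lemma value_eq_of_p₃_eq (hp : P.HasValue S.p₃ p) (hA : P.HasValue S.drift A) {ε : k}
    (hu : P.HasValue S.u ε) : -(A * p) - ε * S.a₃ = 0 :=
  HasValue.unique (P := P.toRationalPlace)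
    (((hA.mul hp).neg.sub (hu.mul (P.hasValue_algebraMap _))).congr S.θ_p₃.symm rfl) (hasValue_θ hp)

end Values

section Pole

variable {P : LogPlace k K} {S : ScaledSolution P.θ} {v : K} {m₁ m₂ v₀ : k} {n : ℕ}
  [CharZero k]

lemma regular_x_pow_mul_p₂ (hτ : S.τ = P.x ^ n * v) (hv : P.HasValue v v₀) (hv₀ : v₀ ≠ 0)
    (hA : P.Regular S.drift) (hq : P.Regular S.q₁) : P.Regular (P.x ^ n * S.p₂) := by
  have := charZero_of_injective_algebraMap (algebraMap k K).injective
  have hv0 := hv.ne_zero hv₀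
  refine ((((regular_τ_mul hA hq).div hv hv₀).add (P.regular_x.pow n)).div (P.hasValue_ofNat 4)
    (OfNat.ofNat_ne_zero 4)).congr ?_
  rw [hτ]
  field_simp
  ring

/-- At a common pole of the same order the coordinates take the same value and the momenta have the
same leading coefficient, which is incompatible with `A = 2 (q₁ p₁ + q₂ p₂) + ⋯` being regular. -/
lemma not_hasPole_and_hasPole (hτ : S.τ = P.x ^ n * v) (hv : P.HasValue v v₀) (hv₀ : v₀ ≠ 0)
    (hu : P.Regular S.u) (h₁ : P.HasPole S.p₁ n m₁) (h₂ : P.HasPole S.p₂ n m₂) : False := by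
  obtain ⟨l, hl⟩ := P.regular_logDeriv S.u
  obtain ⟨A, hA⟩ := regular_drift hu h₁.not_regular
  obtain ⟨b₁, hb₁⟩ := regular_q₁ hu h₁.not_regular
  obtain ⟨b₂, hb₂⟩ := regular_q₂ hu h₁.not_regular
  have hx := P.hasValue_x.pow n
  rw [zero_pow h₁.order_ne_zero] at hx
  have hq₁ := value_eq_of_q₁_eq (n := 0) (by simp) hb₁ (by rw [hτ]; ring)
    (hv.mul (((P.hasValue_ofNat 4).mul h₂.hasValue).sub hx)) hA hl hb₁
  have hq₂ := value_eq_of_q₁_eq (S := S.swap) (n := 0) (by simp) hb₂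
    (by rw [swap_τ, swap_p₂, hτ]; ring) (hv.mul (((P.hasValue_ofNat 4).mul h₁.hasValue).sub hx))
    (S.drift_swap ▸ hA) hl hb₂
  have hp₁ := (((P.hasValue_ofNat 2).mul hb₁).sub hA).unique (hasValue_two_mul_q₁_sub_drift hu h₁)
  have hp₂ := (((P.hasValue_ofNat 2).mul hb₂).sub hA).unique
    (S.drift_swap ▸ hasValue_two_mul_q₁_sub_drift (S := S.swap) hu h₂)
  obtain rfl : b₁ = b₂ := by linear_combination (hp₁ - hp₂) / 2
  obtain rfl : m₁ = m₂ := by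
    refine mul_left_cancel₀ (mul_ne_zero (OfNat.ofNat_ne_zero 4) hv₀) ?_
    linear_combination hq₂ - hq₁
  obtain ⟨ε, hu⟩ := hu
  have h_drift : 4 * (b₁ * m₁) = 0 := by
    have h := (hx.mul hA).unique ((((P.hasValue_ofNat 2).mul ((hb₁.mul h₁.hasValue).add
      (hb₂.mul h₂.hasValue))).add ((hx.mul hu).mul
        (P.hasValue_algebraMap (S.a₀ + S.a₁ + S.a₃)))).congr (by rw [drift]; ring) rfl)
    linear_combination -h
  have hm := h₁.leading_ne_zero
  have hb : b₁ = 0 := by simpa [hm] using h_drift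
  simp [hb, hm, hv₀] at hq₁

end Pole

section Zero

variable [CharZero k] {P : LogPlace k K} {S : ScaledSolution P.θ}

lemma regular_x_mul_timePartial_of_not_regular_p₁ (hu : P.Regular S.u) (hτ : S.τ = P.x)
    (hp₁ : ¬ P.Regular S.p₁) : P.Regular (P.x * S.timePartial) := by
  have hA := regular_drift hu hp₁
  have hτ' : S.τ = P.x ^ 1 * 1 := by rw [hτ, pow_one, mul_one]
  have hxp₂ : P.Regular (P.x ^ 1 * S.p₂) :=
    regular_x_pow_mul_p₂ hτ' P.hasValue_one one_ne_zero hA (regular_q₁ hu hp₁)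
  have hxp₁ : P.Regular (P.x ^ 1 * S.p₁) :=
    regular_x_pow_mul_p₂ (S := S.swap) hτ' P.hasValue_one one_ne_zero (S.drift_swap ▸ hA)
      (regular_q₂ hu hp₁)
  have order_eq_one {f : K} {n : ℕ} {m : k} (h : P.HasPole f n m) (hx : P.Regular (P.x ^ 1 * f)) :
      n = 1 := le_antisymm (h.order_le hx) (Nat.one_le_iff_ne_zero.2 h.order_ne_zero)
  have hp₂ : P.Regular S.p₂ := by
    by_contra hp₂
    obtain ⟨n₁, _, h₁⟩ := P.exists_hasPole hp₁
    obtain ⟨n₂, _, h₂⟩ := P.exists_hasPole hp₂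
    obtain rfl := order_eq_one h₁ hxp₁
    obtain rfl := order_eq_one h₂ hxp₂
    exact not_hasPole_and_hasPole hτ' P.hasValue_one one_ne_zero hu h₁ h₂
  refine (((((P.regular_ofNat 4).mul hxp₁).mul hp₂).sub hxp₁).sub hxp₂).congr ?_
  rw [timePartial]
  ring

theorem regular_hamiltonian (hu : S.u = 1) (hτ : S.τ = P.x) : P.Regular S.hamiltonian := by
  refine regular_of_regular_θ ?_
  rw [S.θ_hamiltonian hu, hτ, ← P.mul_logDeriv, ← mul_assoc, mul_comm S.timePartial]
  refine Regular.mul ?_ (P.regular_logDeriv _)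
  have hu' : P.Regular S.u := hu ▸ P.regular_one
  by_cases hp₁ : P.Regular S.p₁
  · by_cases hp₂ : P.Regular S.p₂
    · exact P.regular_x.mul ((((P.regular_ofNat 4).mul hp₁).mul hp₂).sub hp₁ |>.sub hp₂)
    · exact S.timePartial_swap ▸
        regular_x_mul_timePartial_of_not_regular_p₁ (S := S.swap) hu' hτ hp₂
  · exact regular_x_mul_timePartial_of_not_regular_p₁ hu' hτ hp₁

end Zero

section Infinity

variable [CharZero k] {P : LogPlace k K} {S : ScaledSolution P.θ}

lemma regular_p₁_of_τ_eq_inv (hu : P.Regular S.u) (hτ : S.τ = P.x⁻¹) : P.Regular S.p₁ := by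
  have := charZero_of_injective_algebraMap (algebraMap k K).injective
  by_contra hp
  have h := regular_τ_mul (S := S.swap) (S.drift_swap ▸ regular_drift hu hp) (regular_q₂ hu hp)
  rw [swap_τ, swap_p₂, hτ] at h
  refine hp ((((P.regular_x.mul h).add P.regular_one).div (P.hasValue_ofNat 4)
    (OfNat.ofNat_ne_zero 4)).congr ?_)
  have := P.x_ne_zero
  field_simp
  ring

lemma regular_drift_of_τ_eq_inv (hu : P.Regular S.u) (hτ : S.τ = P.x⁻¹) : P.Regular S.drift := by
  have hp₁ := regular_p₁_of_τ_eq_inv hu hτ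
  have hp₂ : P.Regular S.p₂ := regular_p₁_of_τ_eq_inv (S := S.swap) hu hτ
  have h4 : (-1 / 4 : k) ≠ 0 := by norm_num
  by_contra hA
  have hp₁0 : P.HasValue S.p₁ 0 := by
    by_contra h
    obtain ⟨c, hc, hcτ⟩ := exists_eq_drift_sq_mul (regular_two_mul_q₁_sub_drift hu h) hA
    rw [hτ] at hcτ
    exact inv_x_mul_ne_sq_mul hA (((P.regular_ofNat 4).mul hp₂).sub P.regular_one) hc h4 hcτ
  have hp₂0 : P.HasValue S.p₂ 0 := by
    by_contra h
    obtain ⟨c, hc, hcτ⟩ := exists_eq_drift_sq_mul (S := S.swap)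
      (regular_two_mul_q₁_sub_drift (S := S.swap) hu h) (S.drift_swap ▸ hA)
    rw [drift_swap, swap_τ, hτ] at hcτ
    exact inv_x_mul_ne_sq_mul hA (((P.regular_ofNat 4).mul hp₁).sub P.regular_one) hc h4 hcτ
  refine hA (regular_drift_of_not_hasValue_p₃ hu fun h => ?_)
  simpa using h.unique ((hp₁0.add hp₂0).sub P.hasValue_one)

lemma regular_q₁_of_τ_eq_inv (hu : P.Regular S.u) (hτ : S.τ = P.x⁻¹) : P.Regular S.q₁ := by
  by_contra hq
  obtain ⟨c, hc, hcτ⟩ := exists_eq_q₁_sq_mul (regular_drift_of_τ_eq_inv hu hτ) hq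
  rw [hτ] at hcτ
  have hp₂ : P.Regular S.p₂ := regular_p₁_of_τ_eq_inv (S := S.swap) hu hτ
  exact inv_x_mul_ne_sq_mul hq (((P.regular_ofNat 4).mul hp₂).sub P.regular_one) hc one_ne_zero hcτ

lemma hasValue_p₂_of_τ_eq_inv (hu : P.Regular S.u) (hτ : S.τ = P.x⁻¹) :
    P.HasValue S.p₂ (1 / 4) := by
  have := charZero_of_injective_algebraMap (algebraMap k K).injective
  obtain ⟨_, h⟩ := regular_τ_mul (regular_drift_of_τ_eq_inv hu hτ) (regular_q₁_of_τ_eq_inv hu hτ)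
  refine (((P.hasValue_x.mul h).add P.hasValue_one).div (P.hasValue_ofNat 4)
    (OfNat.ofNat_ne_zero 4)).congr ?_ (by simp)
  have := P.x_ne_zero
  rw [hτ]
  field_simp
  ring

lemma hasValue_p₁_of_τ_eq_inv (hu : P.Regular S.u) (hτ : S.τ = P.x⁻¹) :
    P.HasValue S.p₁ (1 / 4) :=
  hasValue_p₂_of_τ_eq_inv (S := S.swap) hu hτ

lemma hasValue_drift_of_τ_eq_inv (hu : P.HasValue S.u 1) (hτ : S.τ = P.x⁻¹) :
    P.HasValue S.drift (2 * S.a₃) := by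
  obtain ⟨A, hA⟩ := regular_drift_of_τ_eq_inv hu.regular hτ
  have h := value_eq_of_p₃_eq (((hasValue_p₁_of_τ_eq_inv hu.regular hτ).add
    (hasValue_p₂_of_τ_eq_inv hu.regular hτ)).sub P.hasValue_one) hA hu
  exact hA.congr rfl (by linear_combination 2 * h)

lemma hasValue_q₁_of_τ_eq_inv (hu : P.HasValue S.u 1) (hτ : S.τ = P.x⁻¹) :
    P.HasValue S.q₁ (S.a₃ - 2 * S.a₀) := by
  obtain ⟨b, hb⟩ := regular_q₁_of_τ_eq_inv hu.regular hτ
  have h := value_eq_of_p₁_eq (hasValue_p₁_of_τ_eq_inv hu.regular hτ) hb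
    (hasValue_drift_of_τ_eq_inv hu hτ) hu
  exact hb.congr rfl (by linear_combination 2 * h)

/-- The singular part of the Hamiltonian at infinity is
`t (4 p₁ p₂ - p₁ - p₂) = (t (4 p₁ - 1) (4 p₂ - 1) - t) / 4`. -/
theorem hasValue_hamiltonian_add_inv_x_div_four (hu : S.u = 1) (hτ : S.τ = P.x⁻¹) :
    P.HasValue (S.hamiltonian + P.x⁻¹ / 4) (3 / 4 * (S.a₀ + S.a₁ + S.a₃) ^ 2
      - 1 / 2 * (-2 * S.a₀ + S.a₃) * (-2 * S.a₁ + S.a₃) - 3 * (S.a₀ + S.a₁) * S.a₃) := by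
  have := charZero_of_injective_algebraMap (algebraMap k K).injective
  have hu' : P.HasValue S.u 1 := hu ▸ P.hasValue_one
  have hq₁ := hasValue_q₁_of_τ_eq_inv hu' hτ
  have hp₁ := hasValue_p₁_of_τ_eq_inv hu'.regular hτ
  have hp₂ := hasValue_p₂_of_τ_eq_inv hu'.regular hτ
  have hq₂ : P.HasValue S.q₂ _ := hasValue_q₁_of_τ_eq_inv (S := S.swap) hu' hτ
  obtain ⟨y, hy⟩ := regular_τ_mul (regular_drift_of_τ_eq_inv hu'.regular hτ) hq₁.regular
  have hqp := (hq₁.mul hp₁).add (hq₂.mul hp₂)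
  have hC := P.hasValue_algebraMap
  have h_sing : P.HasValue (S.τ * (4 * S.p₂ - 1) * (4 * S.p₁ - 1) / 4) 0 :=
    ((hy.mul (((P.hasValue_ofNat 4).mul hp₁).sub P.hasValue_one)).div (P.hasValue_ofNat 4)
      (OfNat.ofNat_ne_zero 4)).congr rfl (by simp)
  refine ((((((hqp.pow 2).add ((hC (S.a₀ + S.a₁ + S.a₃)).mul hqp)).sub
    ((hq₁.pow 2).mul hp₁)).sub ((hq₂.pow 2).mul hp₂)).sub ((hC S.a₀).mul hq₁)).sub
    ((hC S.a₁).mul hq₂)).add h_sing |>.congr ?_ ?_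
  · rw [hamiltonian, timePartial, hτ]
    field_simp
    ring
  · simp only [swap_a₀, swap_a₃]
    ring

end Infinity

section Finite

variable {P : LogPlace k K} {S : ScaledSolution P.θ} {d e v : K}
  {A b b₁ b₂ c₁ c₂ d₀ e₀ m m₁ m₂ p : k} {i j n : ℕ}

lemma value_eq_of_hasPole_p₁ (hu : P.Regular S.u) (hp : P.HasPole S.p₁ n m)
    (hb : P.HasValue S.q₁ b) (hA : P.HasValue S.drift A) : 2 * b - A = -(n * P.κ) :=
  (((P.hasValue_ofNat 2).mul hb).sub hA).unique (hasValue_two_mul_q₁_sub_drift hu hp)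

lemma hasValue_drift_of_hasPole_p₁ (hu : P.Regular S.u) (h₁ : P.HasPole S.p₁ n m₁)
    (h₂ : P.HasValue (P.x ^ n * S.p₂) m₂) (hm : m₁ + m₂ ≠ 0) : P.HasValue S.drift (n * P.κ) := by
  refine hasValue_drift hu ⟨h₁.order_ne_zero, hm, ?_⟩
  refine ((h₁.hasValue.add h₂).sub (P.hasValue_x.pow n)).congr ?_ ?_
  · rw [p₃]
    ring
  · simp [h₁.order_ne_zero]

lemma hasValue_drift_of_hasPole_two (hu : P.Regular S.u) (h₁ : P.HasPole S.p₁ 2 m)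
    (h₂ : P.HasValue (P.x ^ 2 * S.p₂) 0) : P.HasValue S.drift (2 * P.κ) := by
  exact_mod_cast hasValue_drift_of_hasPole_p₁ hu h₁ h₂ (by simpa using h₁.leading_ne_zero)

lemma value_eq_of_q₁_eq_of_p₂ (hu : S.u = P.x) (hτ : S.τ = P.x ^ (i + j) * v)
    (hv : P.HasValue v P.κ) (hq : S.q₁ = P.x ^ i * e) (he : P.HasValue e e₀)
    (hp : P.HasValue (P.x ^ j * S.p₂) m) (hb : P.HasValue S.q₁ b) (hA : P.HasValue S.drift A) :
    e₀ * (A + P.κ - i * P.κ - b) + P.κ * (4 * m - 0 ^ j) = 0 := by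
  refine value_eq_of_q₁_eq hq he ?_
    (hv.mul (((P.hasValue_ofNat 4).mul hp).sub (P.hasValue_x.pow j))) hA
    (hu ▸ P.hasValue_logDeriv_x) hb
  rw [hτ]
  ring

lemma value_eq_of_drift (hu : S.u = P.x) (h₁ : P.HasValue (P.x ^ j * (S.q₁ * S.p₁)) c₁)
    (h₂ : P.HasValue (P.x ^ j * (S.q₂ * S.p₂)) c₂) (hA : P.HasValue S.drift A) :
    0 ^ j * A = 2 * (c₁ + c₂) := by
  have hx := P.hasValue_x
  refine ((hx.pow j).mul hA).unique ((((P.hasValue_ofNat 2).mul (h₁.add h₂)).add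
    (((hx.pow j).mul hx).mul (P.hasValue_algebraMap (S.a₀ + S.a₁ + S.a₃)))).congr ?_ ?_)
  · rw [drift, hu]
    ring
  · simp

lemma hasValue_x_sq_mul_timePartial (h₁ : P.HasValue (P.x ^ 2 * S.p₁) m)
    (h₂ : P.HasValue S.p₂ p) : P.HasValue (P.x ^ 2 * S.timePartial) (4 * m * p - m) := by
  refine (((((P.hasValue_ofNat 4).mul h₁).mul h₂).sub h₁).sub ((P.hasValue_x.pow 2).mul h₂)).congr
    ?_ (by simp)
  rw [timePartial]
  ring

lemma value_eq_of_q₁_sub_q₂_eq (hu : S.u = P.x)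
    (hτ : S.τ = P.x ^ 2 * v) (hv : P.HasValue v P.κ) (hqd : S.q₁ - S.q₂ = P.x * d)
    (hd : P.HasValue d d₀) (h₁ : P.HasValue (P.x * S.p₁) m₁) (h₂ : P.HasValue (P.x * S.p₂) m₂)
    (hA : P.HasValue S.drift A) (hb₁ : P.HasValue S.q₁ b₁) (hb₂ : P.HasValue S.q₂ b₂) :
    d₀ * P.κ = d₀ * (A + P.κ - b₁ - b₂) + 4 * P.κ * (m₂ - m₁) := by
  have h_eq : d * P.logDeriv (P.x ^ 1 * d) = d * (S.drift + P.logDeriv P.x - S.q₁ - S.q₂)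
      + 4 * (v * (P.x * S.p₂ - P.x * S.p₁)) := by
    have h_log := P.mul_logDeriv (P.x ^ 1 * d)
    have h_q₁ := S.q₁_mul_eq
    have h_q₂ := S.swap.q₁_mul_eq
    simp only [swap_q₁, swap_p₂, swap_τ, swap_u, drift_swap] at h_q₂
    rw [hu] at h_q₁ h_q₂
    rw [pow_one, ← hqd, map_sub] at h_log
    refine mul_left_cancel₀ P.x_ne_zero ?_
    rw [pow_one, ← hqd]
    linear_combination h_log - P.mul_logDeriv S.q₁ + P.mul_logDeriv S.q₂ + h_q₁ - h_q₂
      - (P.logDeriv (S.q₁ - S.q₂) - S.drift - P.logDeriv P.x + S.q₁ + S.q₂) * hqd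
      + 4 * (S.p₂ - S.p₁) * hτ
  have := (hasValue_mul_logDeriv_x_pow_mul hd 1).unique
    (((hd.mul (((hA.add P.hasValue_logDeriv_x).sub hb₁).sub hb₂)).add
      ((P.hasValue_ofNat 4).mul (hv.mul (h₂.sub h₁)))).congr h_eq.symm rfl)
  push_cast at this
  linear_combination this

variable [CharZero k]

lemma order_le_two (hu : P.Regular S.u) (hτ : S.τ = P.x ^ 2 * v) (hv : P.HasValue v P.κ)
    (hp : P.HasPole S.p₁ n m) : n ≤ 2 :=
  hp.order_le (regular_x_pow_mul_p₂ (S := S.swap) hτ hv P.κ_ne_zero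
    (S.drift_swap ▸ regular_drift hu hp.not_regular) (regular_q₂ hu hp.not_regular))

lemma hasValue_q₁_of_hasPole_two (hu : P.Regular S.u) (h₁ : P.HasPole S.p₁ 2 m)
    (hA : P.HasValue S.drift (2 * P.κ)) : P.HasValue S.q₁ 0 := by
  obtain ⟨b, hb⟩ := regular_q₁ hu h₁.not_regular
  have h := value_eq_of_hasPole_p₁ hu h₁ hb hA
  push_cast at h
  exact hb.congr rfl (by linear_combination h / 2)

lemma exists_q₁_eq_x_sq_mul_of_hasPole_two (hu : S.u = P.x) (h₁ : P.HasPole S.p₁ 2 m)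
    (h₂ : P.Regular S.p₂) (hA : P.HasValue S.drift A) (hq : P.HasValue S.q₁ 0) :
    ∃ e, P.Regular e ∧ S.q₁ = P.x ^ 2 * e := by
  obtain ⟨_, hqp₂⟩ := (regular_q₂ (hu ▸ P.regular_x) h₁.not_regular).mul h₂
  obtain ⟨d, ⟨d₀, hd⟩, hqd⟩ := hq.exists_eq_x_mul
  obtain rfl : d₀ = 0 := by
    have h := value_eq_of_drift (j := 1) hu ((hd.mul h₁.hasValue).congr (by rw [hqd]; ring) rfl)
      (((P.hasValue_x.pow 1).mul hqp₂).congr rfl (by rw [zero_pow one_ne_zero, zero_mul])) hA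
    simpa [h₁.leading_ne_zero] using h
  obtain ⟨e, he, rfl⟩ := hd.exists_eq_x_mul
  exact ⟨e, he, by rw [hqd]; ring⟩

lemma exists_hasValue_timePartial_of_hasPole_two (hu : S.u = P.x) (hτ : S.τ = P.x ^ 2 * v)
    (hv : P.HasValue v P.κ) (h₁ : P.HasPole S.p₁ 2 m) (h₂ : P.HasValue S.p₂ p) :
    ∃ n : ℤ, P.HasValue (P.x ^ 2 * S.timePartial) (-(n * P.κ) / 4) := by
  have hκ := P.κ_ne_zero
  have hur : P.Regular S.u := hu ▸ P.regular_x
  have hA := hasValue_drift_of_hasPole_two hur h₁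
    (((P.hasValue_x.pow 2).mul h₂).congr rfl (by simp))
  have hA' : P.HasValue S.swap.drift (2 * P.κ) := S.drift_swap ▸ hA
  have hb₁ := hasValue_q₁_of_hasPole_two hur h₁ hA
  obtain ⟨b₂, hb₂⟩ := regular_q₂ hur h₁.not_regular
  obtain ⟨e, ⟨e₀, he⟩, hqe⟩ := exists_q₁_eq_x_sq_mul_of_hasPole_two hu h₁ h₂.regular hA hb₁
  have h_q₁ := value_eq_of_q₁_eq_of_p₂ (j := 0) hu hτ hv hqe he (by simpa using h₂) hb₁ hA
  have h_q₂ := value_eq_of_q₁_eq_of_p₂ (S := S.swap) (i := 0) (j := 2) hu hτ hv (by simp) hb₂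
    h₁.hasValue hb₂ hA'
  have h_p₂ := value_eq_of_p₁_eq (S := S.swap) h₂ hb₂ hA' (hu ▸ P.hasValue_x)
  have h_drift := value_eq_of_drift (j := 0) hu
    ((he.mul h₁.hasValue).congr (by rw [hqe]; ring) rfl)
    ((hb₂.mul h₂).congr (by ring) rfl) hA
  simp only [pow_zero, Nat.cast_ofNat, Nat.cast_zero] at h_q₁ h_q₂ h_drift
  have h_value := hasValue_x_sq_mul_timePartial h₁.hasValue h₂
  have he₀ : e₀ = 1 - 4 * p := mul_left_cancel₀ hκ (by linear_combination h_q₁)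
  rw [zero_mul, add_zero, mul_eq_zero] at h_p₂
  obtain rfl | hb := h_p₂
  · refine ⟨4, h_value.congr rfl ?_⟩
    rw [he₀] at h_drift
    push_cast
    linear_combination h_drift / 2
  · obtain rfl : b₂ = P.κ := by linear_combination hb / 2
    have hm : m = -P.κ / 2 := mul_left_cancel₀ (mul_ne_zero (OfNat.ofNat_ne_zero 4) hκ)
      (by linear_combination h_q₂)
    have hp : p = 1 / 2 := mul_left_cancel₀ hκ (by
      rw [he₀, hm] at h_drift
      linear_combination -h_drift / 6)
    refine ⟨2, h_value.congr rfl ?_⟩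
    rw [hm, hp]
    push_cast
    ring

lemma not_hasPole_two_and_hasPole_one (hu : S.u = P.x) (hτ : S.τ = P.x ^ 2 * v)
    (hv : P.HasValue v P.κ) (h₁ : P.HasPole S.p₁ 2 m₁) (h₂ : P.HasPole S.p₂ 1 m₂) : False := by
  have hκ := P.κ_ne_zero
  have hur : P.Regular S.u := hu ▸ P.regular_x
  have hA := hasValue_drift_of_hasPole_two hur h₁ (h₂.hasValue_pow_mul_of_lt one_lt_two)
  have hA' : P.HasValue S.swap.drift (2 * P.κ) := S.drift_swap ▸ hA
  have hb₁ := hasValue_q₁_of_hasPole_two hur h₁ hA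
  obtain ⟨b₂, hb₂⟩ := regular_q₂ hur h₁.not_regular
  obtain rfl : b₂ = P.κ / 2 := by
    have := value_eq_of_hasPole_p₁ (S := S.swap) hur h₂ hb₂ hA'
    push_cast at this
    linear_combination this / 2
  obtain ⟨d, ⟨d₀, hd⟩, hqd⟩ := hb₁.exists_eq_x_mul
  have h_q₁ := value_eq_of_q₁_eq_of_p₂ (i := 1) (j := 1) hu hτ hv (by rw [hqd, pow_one]) hd
    h₂.hasValue hb₁ hA
  have h_q₂ := value_eq_of_q₁_eq_of_p₂ (S := S.swap) (i := 0) (j := 2) hu hτ hv (by simp) hb₂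
    h₁.hasValue hb₂ hA'
  have h_drift := value_eq_of_drift (j := 1) hu
    ((hd.mul h₁.hasValue).congr (by rw [hqd]; ring) rfl)
    ((hb₂.mul h₂.hasValue).congr (by ring) rfl) hA
  simp only [pow_one, zero_pow two_ne_zero, Nat.cast_one, Nat.cast_zero] at h_q₁ h_q₂ h_drift
  have hd₀ : d₀ = -2 * m₂ := mul_left_cancel₀ (mul_ne_zero two_ne_zero hκ)
    (by linear_combination h_q₁)
  have hm₁ : m₁ = -5 / 16 * P.κ := mul_left_cancel₀ (mul_ne_zero (OfNat.ofNat_ne_zero 4) hκ)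
    (by linear_combination h_q₂)
  refine mul_ne_zero hκ h₂.leading_ne_zero ?_
  rw [hd₀, hm₁] at h_drift
  linear_combination -4 / 9 * h_drift

lemma leading_mul_leading_of_q₁_zero (hu : S.u = P.x) (hτ : S.τ = P.x ^ 2 * v)
    (hv : P.HasValue v P.κ) (h₁ : P.HasPole S.p₁ 1 m₁) (h₂ : P.HasPole S.p₂ 1 m₂)
    (hb₁ : P.HasValue S.q₁ 0) (hb₂ : P.HasValue S.q₂ 0) : m₁ * m₂ = -P.κ / 16 := by
  have hκ := P.κ_ne_zero
  have hur : P.Regular S.u := hu ▸ P.regular_x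
  have hA : P.HasValue S.drift P.κ := by
    obtain ⟨A, hA⟩ := regular_drift hur h₁.not_regular
    have := value_eq_of_hasPole_p₁ hur h₁ hb₁ hA
    push_cast at this
    exact hA.congr rfl (by linear_combination -this)
  obtain ⟨d, ⟨d₀, hd⟩, hqd⟩ := hb₁.exists_eq_x_mul
  obtain ⟨e, ⟨e₀, he⟩, hqe⟩ := hb₂.exists_eq_x_mul
  have h_q₁ := value_eq_of_q₁_eq_of_p₂ (i := 1) (j := 1) hu hτ hv (by rw [hqd, pow_one]) hd
    h₂.hasValue hb₁ hA
  have h_q₂ := value_eq_of_q₁_eq_of_p₂ (S := S.swap) (i := 1) (j := 1) hu hτ hv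
    (by rw [swap_q₁, hqe, pow_one]) he h₁.hasValue hb₂ (S.drift_swap ▸ hA)
  have h_drift := value_eq_of_drift (j := 0) hu
    ((hd.mul h₁.hasValue).congr (by rw [hqd]; ring) rfl)
    ((he.mul h₂.hasValue).congr (by rw [hqe]; ring) rfl) hA
  simp only [pow_one, pow_zero, Nat.cast_one] at h_q₁ h_q₂ h_drift
  have hd₀ : d₀ = -4 * m₂ := mul_left_cancel₀ hκ (by linear_combination h_q₁)
  have he₀ : e₀ = -4 * m₁ := mul_left_cancel₀ hκ (by linear_combination h_q₂)
  rw [hd₀, he₀] at h_drift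
  linear_combination h_drift / 16

/-- Here `p₁ + p₂` is regular, and the second relation between the leading coefficients comes from
the equation of `q₁ - q₂`, which vanishes at the place. -/
lemma leading_mul_leading_of_q₁_eq (hu : S.u = P.x) (hτ : S.τ = P.x ^ 2 * v)
    (hv : P.HasValue v P.κ) (h₁ : P.HasPole S.p₁ 1 m₁) (h₂ : P.HasPole S.p₂ 1 m₂)
    (hA : P.HasValue S.drift (-3 * P.κ)) (hb₁ : P.HasValue S.q₁ (-2 * P.κ))
    (hb₂ : P.HasValue S.q₂ (-2 * P.κ)) : m₁ * m₂ = -P.κ / 16 := by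
  have hκ := P.κ_ne_zero
  have h₁x : P.HasValue (P.x * S.p₁) m₁ := by simpa using h₁.hasValue
  have h₂x : P.HasValue (P.x * S.p₂) m₂ := by simpa using h₂.hasValue
  have hm : m₁ + m₂ = 0 := by
    by_contra hm
    have := hA.unique (hasValue_drift_of_hasPole_p₁ (hu ▸ P.regular_x) h₁ h₂.hasValue hm)
    refine mul_ne_zero (OfNat.ofNat_ne_zero 4) hκ ?_
    push_cast at this
    linear_combination -this
  obtain ⟨f, hf⟩ : P.Regular S.p₃ := regular_of_hasValue_x_mul
    (((h₁x.add h₂x).sub P.hasValue_x).congr (by rw [p₃]; ring) (by rw [hm, sub_zero]))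
  obtain rfl : f = 0 := by
    have := value_eq_of_p₃_eq hf hA (hu ▸ P.hasValue_x)
    simpa [hκ] using this
  obtain ⟨d, ⟨d₀, hd⟩, hqd⟩ := ((hb₁.sub hb₂).congr rfl (sub_self _)).exists_eq_x_mul
  have hd₀ : d₀ = 4 * (m₁ - m₂) := mul_left_cancel₀ hκ (by
    linear_combination -value_eq_of_q₁_sub_q₂_eq hu hτ hv hqd hd h₁x h₂x hA hb₁ hb₂)
  have h_drift := hA.unique ((((P.hasValue_ofNat 2).mul ((hb₁.mul (hf.add P.hasValue_one)).sub
    (hd.mul h₂x))).add (P.hasValue_x.mul (P.hasValue_algebraMap (S.a₀ + S.a₁ + S.a₃)))).congr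
    (by rw [drift, p₃, hu]; linear_combination 2 * S.p₂ * hqd) rfl)
  rw [hd₀] at h_drift
  obtain rfl : m₁ = -m₂ := eq_neg_of_add_eq_zero_left hm
  linear_combination h_drift / 16

lemma hasValue_timePartial_of_hasPole_one (hu : S.u = P.x) (hτ : S.τ = P.x ^ 2 * v)
    (hv : P.HasValue v P.κ) (h₁ : P.HasPole S.p₁ 1 m₁) (h₂ : P.HasPole S.p₂ 1 m₂) :
    P.HasValue (P.x ^ 2 * S.timePartial) (-P.κ / 4) := by
  have hur : P.Regular S.u := hu ▸ P.regular_x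
  obtain ⟨A, hA⟩ := regular_drift hur h₁.not_regular
  have hA' : P.HasValue S.swap.drift A := S.drift_swap ▸ hA
  obtain ⟨b₁, hb₁⟩ := regular_q₁ hur h₁.not_regular
  obtain ⟨b, hb₂⟩ := regular_q₂ hur h₁.not_regular
  have h_p₁ := value_eq_of_hasPole_p₁ hur h₁ hb₁ hA
  have h_p₂ := value_eq_of_hasPole_p₁ (S := S.swap) hur h₂ hb₂ hA'
  rw [Nat.cast_one, one_mul] at h_p₁ h_p₂
  obtain rfl : b₁ = b := by linear_combination (h_p₁ - h_p₂) / 2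
  have h_q₁ := value_eq_of_q₁_eq_of_p₂ (i := 0) (j := 2) hu hτ hv (by simp) hb₁
    (h₂.hasValue_pow_mul_of_lt one_lt_two) hb₁ hA
  have hm : m₁ * m₂ = -P.κ / 16 := by
    obtain rfl | hb := eq_or_ne b₁ 0
    · exact leading_mul_leading_of_q₁_zero hu hτ hv h₁ h₂ hb₁ hb₂
    · have h_sum : A + P.κ - b₁ = 0 := mul_left_cancel₀ hb (by simpa using h_q₁)
      have hb_eq : b₁ = -2 * P.κ := by linear_combination h_p₁ + h_sum
      have hA_eq : A = -3 * P.κ := by linear_combination h_p₁ + 2 * h_sum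
      subst hb_eq hA_eq
      exact leading_mul_leading_of_q₁_eq hu hτ hv h₁ h₂ hA hb₁ hb₂
  have hx := P.hasValue_x
  have h₁' := h₁.hasValue
  have h₂' := h₂.hasValue
  refine (((P.hasValue_ofNat 4).mul (h₁'.mul h₂')).sub (hx.mul h₁') |>.sub (hx.mul h₂')).congr ?_ ?_
  · rw [timePartial]
    ring
  · rw [hm]
    ring

lemma exists_hasValue_timePartial_of_hasPole (hu : S.u = P.x) (hτ : S.τ = P.x ^ 2 * v)
    (hv : P.HasValue v P.κ) (h₁ : P.HasPole S.p₁ n m₁) (h₂ : P.HasPole S.p₂ j m₂) :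
    ∃ n : ℤ, P.HasValue (P.x ^ 2 * S.timePartial) (-(n * P.κ) / 4) := by
  have hur : P.Regular S.u := hu ▸ P.regular_x
  have hn := order_le_two hur hτ hv h₁
  have hj := order_le_two (S := S.swap) hur hτ hv h₂
  have hn0 := h₁.order_ne_zero
  have hj0 := h₂.order_ne_zero
  interval_cases n <;> interval_cases j <;> try contradiction
  · exact ⟨1, (hasValue_timePartial_of_hasPole_one hu hτ hv h₁ h₂).congr rfl (by simp)⟩
  · exact (not_hasPole_two_and_hasPole_one (S := S.swap) hu hτ hv h₂ h₁).elim
  · exact (not_hasPole_two_and_hasPole_one hu hτ hv h₁ h₂).elim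
  · exact (not_hasPole_and_hasPole hτ hv P.κ_ne_zero hur h₁ h₂).elim

lemma exists_hasValue_timePartial_of_regular_p₂ (hu : S.u = P.x) (hτ : S.τ = P.x ^ 2 * v)
    (hv : P.HasValue v P.κ) (h₂ : P.Regular S.p₂) :
    ∃ n : ℤ, P.HasValue (P.x ^ 2 * S.timePartial) (-(n * P.κ) / 4) := by
  obtain ⟨p, h₂⟩ := h₂
  suffices P.HasValue (P.x ^ 2 * S.p₁) 0 ∨ ∃ m, P.HasPole S.p₁ 2 m by
    obtain h₁ | ⟨m, h₁⟩ := this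
    · exact ⟨0, (hasValue_x_sq_mul_timePartial h₁ h₂).congr rfl (by simp)⟩
    · exact exists_hasValue_timePartial_of_hasPole_two hu hτ hv h₁ h₂
  obtain ⟨a, h₁⟩ | ⟨n, m, h₁⟩ := P.regular_or_hasPole S.p₁
  · exact .inl (((P.hasValue_x.pow 2).mul h₁).congr rfl (by simp))
  · obtain hn | rfl := (order_le_two (hu ▸ P.regular_x) hτ hv h₁).lt_or_eq
    · exact .inl (h₁.hasValue_pow_mul_of_lt hn)
    · exact .inr ⟨m, h₁⟩

theorem exists_hasValue_timePartial (hu : S.u = P.x) (hτ : S.τ = P.x ^ 2 * v)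
    (hv : P.HasValue v P.κ) :
    ∃ n : ℤ, P.HasValue (P.x ^ 2 * S.timePartial) (-(n * P.κ) / 4) := by
  obtain h₂ | ⟨j, m₂, h₂⟩ := P.regular_or_hasPole S.p₂
  · exact exists_hasValue_timePartial_of_regular_p₂ hu hτ hv h₂
  obtain h₁ | ⟨n, m₁, h₁⟩ := P.regular_or_hasPole S.p₁
  · exact S.timePartial_swap ▸
      exists_hasValue_timePartial_of_regular_p₂ (S := S.swap) hu hτ hv h₁
  · exact exists_hasValue_timePartial_of_hasPole hu hτ hv h₁ h₂

end Finite

section RatFunc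

variable [CharZero k] (S : ScaledSolution (eulerDeriv k))

lemma exists_hasValue_X_sub_C_mul_hamiltonian (hu : S.u = 1) (hτ : S.τ = RatFunc.X) (c : k) :
    ∃ n : ℤ, (point c).HasValue ((RatFunc.X - RatFunc.C c) * S.hamiltonian)
      (c * n / 4) := by
  obtain rfl | hc := eq_or_ne c 0
  · obtain ⟨_, h⟩ := regular_hamiltonian (P := LogPlace.eulerZero k) (S := S) hu (by simp [hτ])
    exact ⟨0, ((point 0).hasValue_x.mul h).congr rfl (by simp)⟩
  let P := LogPlace.eulerPoint hc
  let T : ScaledSolution P.θ := S.scale hu P.x_ne_zero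
  have hT : T.τ = P.x ^ 2 * RatFunc.X := congrArg _ hτ
  obtain ⟨n, hn⟩ := exists_hasValue_timePartial (S := T) rfl hT (hasValue_point_X c)
  refine ⟨n, (hasValue_x_mul_of_hasValue_x_mul_θ (P := P) (f := S.hamiltonian)
    ((hn.mul (hasValue_point_X c)).congr ?_ rfl)).congr rfl ?_⟩
  · have h : P.θ S.hamiltonian = P.x * eulerDeriv k S.hamiltonian := rfl
    rw [h, S.θ_hamiltonian hu, hτ, eulerDeriv_X]
    change P.x ^ 2 * S.timePartial * _ = _
    ring
  · change -(-(n * c) / 4 * c) / c = _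
    field_simp

/-- This is the partial fraction expansion of `H + X / 4` evaluated at `0`. -/
theorem exists_hasValue_hamiltonian_zero [IsAlgClosed k] (hu : S.u = 1) (hτ : S.τ = RatFunc.X) :
    ∃ n : ℤ, (point 0).HasValue S.hamiltonian
      (3 / 4 * (S.a₀ + S.a₁ + S.a₃) ^ 2 - 1 / 2 * (-2 * S.a₀ + S.a₃) * (-2 * S.a₁ + S.a₃)
        - 3 * (S.a₀ + S.a₁) * S.a₃ - n / 4) := by
  choose n hn using S.exists_hasValue_X_sub_C_mul_hamiltonian hu hτ
  have h_infinity := hasValue_hamiltonian_add_inv_x_div_four (P := LogPlace.eulerInfinity k)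
    (S := S) hu (by simp [hτ])
  rw [eulerInfinity_x, inv_inv] at h_infinity
  have hX (c : k) : (point c).HasValue (RatFunc.X / 4) (c / 4) :=
    (hasValue_point_X c).div (hasValue_ofNat _ 4) (OfNat.ofNat_ne_zero 4)
  obtain ⟨s, hs⟩ := eq_add_sum_div_of_hasValue (r := fun c => c * n c / 4) (fun c =>
    ((hn c).add ((point c).hasValue_x.mul (hX c))).congr (mul_add _ _ _).symm
      (by ring)) h_infinity
  have h_term (c : k) : ∃ m : ℤ, (point 0).HasValue
      (RatFunc.C (c * n c / 4) / (RatFunc.X - RatFunc.C c)) (-(m : k) / 4) := by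
    obtain rfl | hc := eq_or_ne c 0
    · exact ⟨0, (hasValue_zero _).congr (by simp) (by simp)⟩
    · refine ⟨n c, ((hasValue_algebraMap _ _).div ((hasValue_point_X 0).sub
        (hasValue_algebraMap _ c)) (by simpa using hc)).congr
        (by simp only [RatFunc.algebraMap_eq_C]; rfl) ?_⟩
      field_simp
      ring
  choose m hm using h_term
  refine ⟨∑ c ∈ s, m c, ((((hasValue_algebraMap _ _).add
    (HasValue.sum fun c _ => hm c)).sub (hX 0)).congr (sub_eq_of_eq_add hs.symm) ?_)⟩
  rw [← Finset.sum_div, Finset.sum_neg_distrib, Int.cast_sum]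
  ring

end RatFunc

end ScaledSolution

/-! ### Rational solutions over `ℂ` -/

section Complex

open RationalPlace

lemma hasValue_point_evR {f : RatFunc ℂ} {c : ℂ} (hf : NoPoleAt f c) :
    (point c).HasValue f (evR f c) :=
  hasValue_point_iff.2 ⟨hf, rfl⟩

lemma hasValue_point_ratFuncDeriv {f : RatFunc ℂ} {c : ℂ} (hf : NoPoleAt f c) :
    (point c).HasValue (ratFuncDeriv ℂ f) (deriv (evR f) c) := by
  have h_deriv : deriv (evR f) c = _ := ((f.num.hasDerivAt c).div (f.denom.hasDerivAt c) hf).deriv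
  have hn := hasValue_point_algebraMap c f.num
  have hd := hasValue_point_algebraMap c f.denom
  have hn' := hasValue_point_algebraMap c (derivative f.num)
  have hd' := hasValue_point_algebraMap c (derivative f.denom)
  refine (((hn'.mul hd).sub (hn.mul hd')).div (hd.pow 2) (pow_ne_zero 2 hf)).congr ?_ h_deriv.symm
  conv_rhs => rw [← f.num_div_denom, Derivation.leibniz_div, ratFuncDeriv_algebraMap,
    ratFuncDeriv_algebraMap]
  rw [smul_eq_mul, smul_eq_mul, smul_eq_mul]
  ring

namespace IsSasanoSol

variable {a0 a1 a3 : ℂ} {q1 p1 q2 p2 : RatFunc ℂ}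

lemma swap (h : IsSasanoSol a0 a1 a3 q1 p1 q2 p2) : IsSasanoSol a1 a0 a3 q2 p2 q1 p1 := by
  intro t hq2 hp2 hq1 hp1
  obtain ⟨h₁, h₂, h₃, h₄⟩ := h t hq1 hp1 hq2 hp2
  refine ⟨?_, ?_, ?_, ?_⟩
  · linear_combination h₃
  · linear_combination h₄
  · linear_combination h₁
  · linear_combination h₂

lemma eulerDeriv_q1 (h : IsSasanoSol a0 a1 a3 q1 p1 q2 p2) :
    eulerDeriv ℂ q1 = q1 * (2 * (q1 * p1 + q2 * p2) + algebraMap ℂ _ (a0 + a1 + a3) - q1)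
      + RatFunc.X * (4 * p2 - 1) := by
  refine eq_of_forall_hasValue_point (d := q1.denom * p1.denom * q2.denom * p2.denom)
    (by simp [RatFunc.denom_ne_zero]) fun c hc => ?_
  simp only [eval_mul, mul_ne_zero_iff] at hc
  obtain ⟨⟨⟨hq1, hp1⟩, hq2⟩, hp2⟩ := hc
  have vq1 := hasValue_point_evR hq1
  have vp1 := hasValue_point_evR hp1
  have vq2 := hasValue_point_evR hq2
  have vp2 := hasValue_point_evR hp2
  have vX := hasValue_point_X c
  have h2 := (point c).hasValue_ofNat 2
  have h4 := (point c).hasValue_ofNat 4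
  refine ⟨_, vX.mul (hasValue_point_ratFuncDeriv hq1), ((vq1.mul (((h2.mul ((vq1.mul vp1).add
    (vq2.mul vp2))).add (hasValue_algebraMap _ _)).sub vq1)).add
    (vX.mul ((h4.mul vp2).sub (hasValue_one _)))).congr rfl ?_⟩
  linear_combination -(h c hq1 hp1 hq2 hp2).1

lemma eulerDeriv_p1 (h : IsSasanoSol a0 a1 a3 q1 p1 q2 p2) :
    eulerDeriv ℂ p1 = p1 * (2 * q1 - (2 * (q1 * p1 + q2 * p2) + algebraMap ℂ _ (a0 + a1 + a3)))
      + algebraMap ℂ _ a0 := by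
  refine eq_of_forall_hasValue_point (d := q1.denom * p1.denom * q2.denom * p2.denom)
    (by simp [RatFunc.denom_ne_zero]) fun c hc => ?_
  simp only [eval_mul, mul_ne_zero_iff] at hc
  obtain ⟨⟨⟨hq1, hp1⟩, hq2⟩, hp2⟩ := hc
  have vq1 := hasValue_point_evR hq1
  have vp1 := hasValue_point_evR hp1
  have vq2 := hasValue_point_evR hq2
  have vp2 := hasValue_point_evR hp2
  have h2 := (point c).hasValue_ofNat 2
  refine ⟨_, (hasValue_point_X c).mul (hasValue_point_ratFuncDeriv hp1),
    ((vp1.mul ((h2.mul vq1).sub ((h2.mul ((vq1.mul vp1).add (vq2.mul vp2))).add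
    (hasValue_algebraMap _ _)))).add (hasValue_algebraMap _ _)).congr rfl ?_⟩
  linear_combination -(h c hq1 hp1 hq2 hp2).2.1

/-- A rational solution of the Sasano system as an unscaled solution over `ℂ(t)`. -/
noncomputable def scaledSolution (h : IsSasanoSol a0 a1 a3 q1 p1 q2 p2) :
    ScaledSolution (eulerDeriv ℂ) where
  a₀ := a0
  a₁ := a1
  a₃ := a3
  u := 1
  τ := RatFunc.X
  q₁ := q1
  p₁ := p1
  q₂ := q2
  p₂ := p2
  τ_ne_zero := RatFunc.X_ne_zero
  θ_q₁ := by simp [h.eulerDeriv_q1]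
  θ_p₁ := by simp [h.eulerDeriv_p1]
  θ_q₂ := by
    rw [h.swap.eulerDeriv_q1, add_comm a1, add_comm (q2 * p2)]
    simp
  θ_p₂ := by
    rw [h.swap.eulerDeriv_p1, add_comm a1, add_comm (q2 * p2)]
    simp

lemma hamiltonian_scaledSolution (h : IsSasanoSol a0 a1 a3 q1 p1 q2 p2) :
    h.scaledSolution.hamiltonian = sasanoH a0 a1 a3 q1 p1 q2 p2 := by
  simp only [ScaledSolution.hamiltonian, ScaledSolution.timePartial, scaledSolution, sasanoH,
    RatFunc.algebraMap_eq_C]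
  ring

end IsSasanoSol

end Complex

theorem sasano_hamiltonian_value_difference_integer (a0 a1 a2 a3 : ℂ)
    (hpar : a0 + a1 + 2 * a2 + a3 = 1 / 2)
    (q1 p1 q2 p2 : RatFunc ℂ)
    (hsol : IsSasanoSol a0 a1 a3 q1 p1 q2 p2) :
    NoPoleAt (sasanoH a0 a1 a3 q1 p1 q2 p2) 0 ∧
    ∃ n : ℤ,
      4 * ((3 / 4 * (a0 + a1 + a3) ^ 2
        - 1 / 2 * (-2 * a0 + a3) * (-2 * a1 + a3) - 3 * (a0 + a1) * a3)
        - evR (sasanoH a0 a1 a3 q1 p1 q2 p2) 0) = n := by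
  obtain ⟨n, hn⟩ := hsol.scaledSolution.exists_hasValue_hamiltonian_zero rfl rfl
  rw [hsol.hamiltonian_scaledSolution, RationalPlace.hasValue_point_iff] at hn
  obtain ⟨h_noPole, h_value⟩ := hn
  refine ⟨h_noPole, n, ?_⟩
  rw [evR, h_value, IsSasanoSol.scaledSolution]
  ring
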